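/- arXiv:1110.6140 — 2 statements merged into one kernel-verified Lean document; each statement's English description precedes it below -/
import Mathlib

section
/- Every dendroid in Euclidean n-space *-includes a tree: for every dendroid D ⊆ ℝⁿ and every real ε > 0 there exists a tree (as a continuum) E with E ⊆ D and d_H(E, D) < ε. -/
open Set Metric

section TopDefs

variable {α : Type*} [TopologicalSpace α]

/-- `A ⊆ α` is an arc with endpoints `x` and `y`:
a homeomorphic (continuous injective) image of `[0,1]` sending `0 ↦ x`, `1 ↦ y`. -/
def IsArc (A : Set α) (x y : α) : Prop :=
  ∃ f : Set.Icc (0:ℝ) 1 → α, Continuous f ∧ Function.Injective f ∧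
    Set.range f = A ∧ f ⟨0, by norm_num⟩ = x ∧ f ⟨1, by norm_num⟩ = y

/-- A continuum: a nonempty compact connected set. -/
def IsContinuum (X : Set α) : Prop := IsCompact X ∧ IsConnected X

/-- Any two distinct points of `X` are endpoints of an arc contained in `X`. -/
def ArcwiseConnectedSet (X : Set α) : Prop :=
  ∀ x ∈ X, ∀ y ∈ X, x ≠ y → ∃ A, A ⊆ X ∧ IsArc A x y

/-- `X` is unicoherent: for all closed connected `A, B ⊆ X` with `A ∪ B = X`,
the intersection `A ∩ B` is connected. -/
def UnicoherentSet (X : Set α) : Prop :=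
  ∀ A B : Set α, A ⊆ X → B ⊆ X → IsClosed A → IsClosed B →
    IsConnected A → IsConnected B → A ∪ B = X → IsConnected (A ∩ B)

/-- Every subcontinuum of `X` is unicoherent. -/
def HereditarilyUnicoherent (X : Set α) : Prop :=
  ∀ Y, Y ⊆ X → IsContinuum Y → UnicoherentSet Y

/-- A dendroid: an arcwise connected, hereditarily unicoherent continuum. -/
def IsDendroid (X : Set α) : Prop :=
  IsContinuum X ∧ ArcwiseConnectedSet X ∧ HereditarilyUnicoherent X

/-- The unit circle `S¹`. -/
def unitCircle : Set (EuclideanSpace ℝ (Fin 2)) := Metric.sphere 0 1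

/-- A dendrite: a locally connected continuum containing no subset homeomorphic to `S¹`. -/
def IsDendrite (X : Set α) : Prop :=
  IsContinuum X ∧ LocallyConnectedSpace ↥X ∧
    ∀ S : Set α, S ⊆ X → IsEmpty (↥S ≃ₜ ↥unitCircle)

/-- `x` and `y` lie in the same arc-component of `Y`. -/
def SameArcComponent (Y : Set α) (x y : α) : Prop :=
  x = y ∨ ∃ A, A ⊆ Y ∧ IsArc A x y

/-- `x` is a ramification point of `X`: `X \ {x}` has at least three arc-components. -/
def IsRamificationPoint (X : Set α) (x : α) : Prop :=
  x ∈ X ∧ ∃ u v w, u ∈ X \ {x} ∧ v ∈ X \ {x} ∧ w ∈ X \ {x} ∧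
    ¬ SameArcComponent (X \ {x}) u v ∧ ¬ SameArcComponent (X \ {x}) u w ∧
    ¬ SameArcComponent (X \ {x}) v w

/-- A tree (as a continuum): a dendrite with finitely many ramification points. -/
def IsTreeContinuum (X : Set α) : Prop :=
  IsDendrite X ∧ {x | IsRamificationPoint X x}.Finite

end TopDefs

section CompDefs

/-- The rational open ball in `ℝ²` coded by `((q₁, q₂), r)`. -/
def ballOfCode (c : (ℚ × ℚ) × ℚ) : Set (ℝ × ℝ) :=
  {x | dist x (((c.1.1 : ℝ), (c.1.2 : ℝ)) : ℝ × ℝ) < (c.2 : ℝ)}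

/-- A closed set `F ⊆ ℝ²` is `Π⁰₁` if it is the complement of the union of the rational
open balls coded by some c.e. set of codes. -/
def IsPi01Closed (F : Set (ℝ × ℝ)) : Prop :=
  ∃ W : (ℚ × ℚ) × ℚ → Prop, REPred W ∧ F = Set.univ \ ⋃ c ∈ {c | W c}, ballOfCode c

/-- `F ⊆ ℝ²` is c.e. closed if the set of codes of rational open balls meeting `F` is c.e. -/
def IsCEClosed (F : Set (ℝ × ℝ)) : Prop :=
  REPred (fun c : (ℚ × ℚ) × ℚ => (F ∩ ballOfCode c).Nonempty)

/-- A computable closed subset of `ℝ²`: both `Π⁰₁` and c.e. closed. -/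
def IsComputableClosed (F : Set (ℝ × ℝ)) : Prop :=
  IsPi01Closed F ∧ IsCEClosed F

/-- A point of `ℝ²` is computable if the set of codes of rational open balls
containing it is c.e. -/
def IsComputablePoint (x : ℝ × ℝ) : Prop :=
  REPred (fun c : (ℚ × ℚ) × ℚ => x ∈ ballOfCode c)

end CompDefs

section PsiDefs

/-- A tree of binary strings: a set of finite binary strings closed under prefixes. -/
def IsTreeOfStrings (T : Set (List Bool)) : Prop :=
  ∀ σ ∈ T, ∀ τ : List Bool, τ <+: σ → τ ∈ T

/-- The point `ψ(σ) ∈ ℝ²` associated with the binary string `σ`. -/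
noncomputable def psiPt (σ : List Bool) : ℝ × ℝ :=
  ((3:ℝ) ^ (-(σ.length : ℤ)) / 2 +
      2 * ∑ i ∈ Finset.range σ.length,
        (if σ.getD i false then (3:ℝ) ^ (-((i : ℤ) + 1)) else 0),
    (2:ℝ) ^ (-(σ.length : ℤ)))

/-- The planar embedding `Ψ(T)` of a tree `T` of binary strings: the closure of the union
of the segments from `ψ(σ⁻)` to `ψ(σ)` over nonempty `σ ∈ T` (together with the points
`ψ(σ)`, `σ ∈ T`, which makes no difference except for the degenerate trees `∅`, `{⟨⟩}`). -/
noncomputable def PsiSet (T : Set (List Bool)) : Set (ℝ × ℝ) :=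
  closure (psiPt '' T ∪ ⋃ σ ∈ T, ⋃ (_ : σ ≠ []), segment ℝ (psiPt σ.dropLast) (psiPt σ))

end PsiDefs

/-!
Fix a point `p` of the dendroid `D` and a finite `ε / 2`-net of `D`, and let `E` be the union of
arcs in `D` from `p` to the points of the net. As a compact continuous image of finitely many
intervals, `E` is a locally connected continuum, and it contains no circle because the circle is
the union of two arcs with disconnected intersection, hence not unicoherent. If `x` is a
ramification point of `E`, then two arc-components of `E \ {x}` avoid `p`; the chosen arcs that lead
to them pass through `x` and do not meet again after `x`. So `x` is the last point of one chosen arc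
on another one, and there are only finitely many such points.
-/

open Function unitInterval

section Arc

variable {α : Type*} [TopologicalSpace α] {A B : Set α} {u v x y z : α}

lemma isArc_iff_exists_path : IsArc A x y ↔ ∃ γ : Path x y, Injective γ ∧ range γ = A := by
  constructor
  · rintro ⟨f, hf, f_inj, f_range, f_zero, f_one⟩
    exact ⟨⟨⟨f, hf⟩, f_zero, f_one⟩, f_inj, f_range⟩
  · rintro ⟨γ, γ_inj, γ_range⟩
    exact ⟨γ, γ.continuous, γ_inj, γ_range, γ.source, γ.target⟩

lemma isArc_range {γ : Path x y} (hγ : Injective γ) : IsArc (range γ) x y :=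
  isArc_iff_exists_path.2 ⟨γ, hγ, rfl⟩

lemma injective_convexComb {a b : ℝ} {s t : Icc a b} (hst : s ≠ t) :
    Injective (Icc.convexComb s t) := by
  intro c d hcd
  have hcd' := congrArg Subtype.val hcd
  simp only [Icc.coe_convexComb] at hcd'
  have hts : (t : ℝ) - s ≠ 0 := sub_ne_zero.2 fun h => hst (Subtype.ext h.symm)
  exact Subtype.ext (mul_right_cancel₀ hts (by linarith))

lemma isArc_image_uIcc {γ : Path x y} (hγ : Injective γ) {s t : I} (hst : s ≠ t) :
    IsArc (γ '' uIcc s t) (γ s) (γ t) := by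
  rw [← γ.range_subpath]
  exact isArc_range (γ := γ.subpath s t) (hγ.comp (injective_convexComb hst))

lemma injective_path_trans {γ : Path x y} {δ : Path y z} (hγ : Injective γ) (hδ : Injective δ)
    (hγδ : range γ ∩ range δ ⊆ {y}) : Injective (γ.trans δ) := by
  have meet_only_at_ends : ∀ a b : I, γ a = δ b → (a : ℝ) = 1 ∧ (b : ℝ) = 0 := by
    intro a b hab
    have hay : γ a = y := hγδ ⟨mem_range_self a, hab ▸ mem_range_self b⟩
    have ha : a = 1 := hγ (hay.trans γ.target.symm)
    have hb : b = 0 := hδ ((hab.symm.trans hay).trans δ.source.symm)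
    simp [ha, hb]
  intro a b hab
  rw [Path.trans_apply, Path.trans_apply] at hab
  apply Subtype.ext
  split_ifs at hab with ha hb hb
  · linarith [Subtype.mk.inj (hγ hab)]
  · linarith [(meet_only_at_ends _ _ hab).1, (meet_only_at_ends _ _ hab).2]
  · linarith [(meet_only_at_ends _ _ hab.symm).1, (meet_only_at_ends _ _ hab.symm).2]
  · linarith [Subtype.mk.inj (hδ hab)]

lemma IsArc.union (hA : IsArc A x y) (hB : IsArc B y z) (hAB : A ∩ B ⊆ {y}) :
    IsArc (A ∪ B) x z := by
  obtain ⟨γ, hγ, rfl⟩ := isArc_iff_exists_path.1 hA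
  obtain ⟨δ, hδ, rfl⟩ := isArc_iff_exists_path.1 hB
  rw [← Path.trans_range]
  exact isArc_range (injective_path_trans hγ hδ hAB)

lemma IsArc.left_mem (hA : IsArc A x y) : x ∈ A := by
  obtain ⟨γ, -, rfl⟩ := isArc_iff_exists_path.1 hA
  exact γ.source_mem_range

lemma IsArc.right_mem (hA : IsArc A x y) : y ∈ A := by
  obtain ⟨γ, -, rfl⟩ := isArc_iff_exists_path.1 hA
  exact γ.target_mem_range

lemma IsArc.isCompact (hA : IsArc A x y) : IsCompact A := by
  obtain ⟨γ, -, rfl⟩ := isArc_iff_exists_path.1 hA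
  exact isCompact_range γ.continuous

lemma IsArc.exists_subarc (hA : IsArc A x y) (hu : u ∈ A) (hv : v ∈ A) (huv : u ≠ v) :
    ∃ A' ⊆ A, IsArc A' u v := by
  obtain ⟨γ, hγ, rfl⟩ := isArc_iff_exists_path.1 hA
  obtain ⟨s, rfl⟩ := hu
  obtain ⟨t, rfl⟩ := hv
  exact ⟨_, image_subset_range _ _, isArc_image_uIcc hγ (ne_of_apply_ne γ huv)⟩

lemma IsArc.exists_subarc_inter_subset_singleton (hA : IsArc A x y) (hB : IsClosed B)
    (hxB : x ∉ B) (hAB : (A ∩ B).Nonempty) :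
    ∃ w ∈ B, ∃ A' ⊆ A, IsArc A' x w ∧ A' ∩ B ⊆ {w} := by
  obtain ⟨γ, hγ, rfl⟩ := isArc_iff_exists_path.1 hA
  obtain ⟨_, ⟨t, rfl⟩, ht⟩ := hAB
  obtain ⟨c, hcB, hc_least⟩ := (hB.preimage γ.continuous).isCompact.exists_isLeast ⟨t, ht⟩
  have hc : (0 : I) ≠ c := by
    rintro rfl
    exact hxB (γ.source ▸ hcB)
  refine ⟨γ c, hcB, γ '' uIcc 0 c, image_subset_range _ _, ?_, ?_⟩
  · simpa only [γ.source] using isArc_image_uIcc hγ hc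
  · rintro _ ⟨⟨e, he, rfl⟩, heB⟩
    rw [uIcc_of_le (zero_le : 0 ≤ c)] at he
    rw [le_antisymm he.2 (hc_least heB), mem_singleton_iff]

end Arc

section SameArcComponent

variable {α : Type*} [TopologicalSpace α] {A X Y E : Set α} {p q r u v x y z : α}

lemma IsArc.sameArcComponent (hA : IsArc A x y) (hAY : A ⊆ Y) (hu : u ∈ A) (hv : v ∈ A) :
    SameArcComponent Y u v := by
  rcases eq_or_ne u v with rfl | huv
  · exact Or.inl rfl
  · obtain ⟨A', hA', harc⟩ := hA.exists_subarc hu hv huv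
    exact Or.inr ⟨A', hA'.trans hAY, harc⟩

lemma SameArcComponent.symm (h : SameArcComponent Y x y) : SameArcComponent Y y x := by
  rcases h with rfl | ⟨A, hAY, hA⟩
  · exact Or.inl rfl
  · exact hA.sameArcComponent hAY hA.right_mem hA.left_mem

lemma SameArcComponent.trans [T2Space α] (hxy : SameArcComponent Y x y)
    (hyz : SameArcComponent Y y z) : SameArcComponent Y x z := by
  rcases hxy with rfl | ⟨A, hAY, hA⟩
  · exact hyz
  rcases hyz with rfl | ⟨B, hBY, hB⟩
  · exact Or.inr ⟨A, hAY, hA⟩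
  by_cases hxB : x ∈ B
  · exact hB.sameArcComponent hBY hxB hB.right_mem
  obtain ⟨w, hwB, A', hA'A, hA', hA'B⟩ := hA.exists_subarc_inter_subset_singleton
    hB.isCompact.isClosed hxB ⟨y, hA.right_mem, hB.left_mem⟩
  rcases eq_or_ne w z with rfl | hwz
  · exact Or.inr ⟨A', hA'A.trans hAY, hA'⟩
  obtain ⟨B', hB'B, hB'⟩ := hB.exists_subarc hwB hB.right_mem hwz
  exact Or.inr ⟨A' ∪ B', union_subset (hA'A.trans hAY) (hB'B.trans hBY),
    hA'.union hB' ((inter_subset_inter_right _ hB'B).trans hA'B)⟩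

lemma sameArcComponent_diff_singleton {γ : Path x y} (hγ : Injective γ) (hE : range γ ⊆ E)
    {a s t : I} (ha : a ∉ uIcc s t) : SameArcComponent (E \ {γ a}) (γ s) (γ t) := by
  rcases eq_or_ne s t with rfl | hst
  · exact Or.inl rfl
  · refine Or.inr ⟨_, ?_, isArc_image_uIcc hγ hst⟩
    rintro _ ⟨c, hc, rfl⟩
    exact ⟨hE (mem_range_self c), fun hca => ha (hγ hca ▸ hc)⟩

lemma IsRamificationPoint.exists_not_sameArcComponent [T2Space α] (hx : IsRamificationPoint X x)
    (p : α) : ∃ u ∈ X \ {x}, ∃ v ∈ X \ {x}, ¬ SameArcComponent (X \ {x}) u v ∧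
      ¬ SameArcComponent (X \ {x}) u p ∧ ¬ SameArcComponent (X \ {x}) v p := by
  obtain ⟨-, u, v, w, hu, hv, hw, huv, huw, hvw⟩ := hx
  by_cases hup : SameArcComponent (X \ {x}) u p
  · exact ⟨v, hv, w, hw, hvw, fun hvp => huv (hup.trans hvp.symm),
      fun hwp => huw (hup.trans hwp.symm)⟩
  by_cases hvp : SameArcComponent (X \ {x}) v p
  · exact ⟨u, hu, w, hw, huw, hup, fun hwp => hvw (hvp.trans hwp.symm)⟩
  · exact ⟨u, hu, v, hv, huv, hup, hvp⟩

-- A later meeting point would join `γ s`, along `δ`, either to `δ t` or to `p`.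
lemma isGreatest_preimage_range_of_not_sameArcComponent [T2Space α] {γ : Path p q} {δ : Path p r}
    (hγ : Injective γ) (hδ : Injective δ) (hγE : range γ ⊆ E) (hδE : range δ ⊆ E) {a b s t : I}
    (hab : γ a = δ b) (has : a < s) (hbt : b < t)
    (hsp : ¬ SameArcComponent (E \ {γ a}) (γ s) p)
    (hst : ¬ SameArcComponent (E \ {γ a}) (γ s) (δ t)) :
    IsGreatest (γ ⁻¹' range δ) a := by
  refine ⟨⟨b, hab.symm⟩, ?_⟩
  rintro c ⟨d, hd⟩
  by_contra! hac
  have hsd : SameArcComponent (E \ {γ a}) (γ s) (δ d) :=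
    hd ▸ sameArcComponent_diff_singleton hγ hγE (notMem_uIcc_of_lt has hac)
  rcases lt_trichotomy d b with hdb | rfl | hbd
  · refine hsp (hsd.trans ?_)
    have hdp := sameArcComponent_diff_singleton hδ hδE
      (notMem_uIcc_of_gt hdb (zero_le.trans_lt hdb))
    rwa [← hab, δ.source] at hdp
  · exact hac.ne (hγ (hab.trans hd))
  · refine hst (hsd.trans ?_)
    rw [hab]
    exact sameArcComponent_diff_singleton hδ hδE (notMem_uIcc_of_lt hbd hbt)

end SameArcComponent

lemma locallyConnectedSpace_range {α β : Type*} [TopologicalSpace α] [TopologicalSpace β]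
    [CompactSpace β] [LocallyConnectedSpace β] [T2Space α] {g : β → α} (hg : Continuous g) :
    LocallyConnectedSpace (range g) := by
  have hg' : Continuous (rangeFactorization g) := hg.subtype_mk _
  exact (hg'.isClosedMap.isQuotientMap hg'
    rangeFactorization_surjective).isCoinducing.locallyConnectedSpace

section PathFan

variable {α ι : Type*} [TopologicalSpace α] {p : α} {q : ι → α}

/-- The fan of the paths `γ i` issuing from the common apex `p`: the union of their ranges. The apex
is adjoined so that the fan of an empty family is `{p}`. -/
def pathFan (γ : ∀ i, Path p (q i)) : Set α := insert p (⋃ i, range (γ i))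

variable {γ : ∀ i, Path p (q i)}

lemma range_subset_pathFan (γ : ∀ i, Path p (q i)) (i : ι) : range (γ i) ⊆ pathFan γ :=
  (subset_iUnion (fun i => range (γ i)) i).trans (subset_insert _ _)

lemma pathFan_subset {D : Set α} (hp : p ∈ D) (hγ : ∀ i, range (γ i) ⊆ D) : pathFan γ ⊆ D :=
  insert_subset hp (iUnion_subset hγ)

lemma pathFan_eq_range (γ : ∀ i, Path p (q i)) :
    pathFan γ = range (Sum.elim (fun _ : Unit => p) fun c : Σ _ : ι, I => γ c.1 c.2) := by
  ext y
  simp [pathFan, eq_comm]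

lemma isContinuum_pathFan [Finite ι] (γ : ∀ i, Path p (q i)) : IsContinuum (pathFan γ) := by
  refine ⟨(isCompact_iUnion fun i => isCompact_range (γ i).continuous).insert p,
    insert_nonempty _ _, ?_⟩
  refine isPreconnected_of_forall p fun y hy => ?_
  rcases hy with rfl | hy
  · exact ⟨{y}, by simp [pathFan], rfl, rfl, isPreconnected_singleton⟩
  · obtain ⟨i, hi⟩ := mem_iUnion.1 hy
    exact ⟨range (γ i), range_subset_pathFan γ i, (γ i).source_mem_range, hi,
      isPreconnected_range (γ i).continuous⟩

lemma locallyConnectedSpace_pathFan [Finite ι] [T2Space α] (γ : ∀ i, Path p (q i)) :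
    LocallyConnectedSpace (pathFan γ) := by
  rw [pathFan_eq_range]
  have : LocallyPathConnectedSpace I := (convex_Icc (0 : ℝ) 1).locallyPathConnectedSpace
  exact locallyConnectedSpace_range
    (continuous_const.sumElim (continuous_sigma fun i => (γ i).continuous))

lemma exists_lt_of_not_sameArcComponent_apex (hγ : ∀ i, Injective (γ i)) {v x : α}
    (hv : v ∈ pathFan γ \ {x}) (hvp : ¬ SameArcComponent (pathFan γ \ {x}) v p) :
    ∃ (i : ι) (a s : I), a < s ∧ γ i a = x ∧ γ i s = v := by
  have hv_ne : v ≠ p := fun h => hvp (Or.inl h)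
  obtain ⟨i, s, rfl⟩ := mem_iUnion.1 (hv.1.resolve_left hv_ne)
  have hs : (0 : I) ≠ s := by
    rintro rfl
    exact hv_ne (γ i).source
  by_contra! hx
  refine hvp (SameArcComponent.symm (Or.inr ⟨γ i '' uIcc 0 s, ?_, ?_⟩))
  · rintro _ ⟨c, hc, rfl⟩
    rw [uIcc_of_le (zero_le : 0 ≤ s)] at hc
    refine ⟨range_subset_pathFan γ i (mem_range_self c), fun hcx => ?_⟩
    rcases hc.2.eq_or_lt with rfl | hcs
    · exact hv.2 hcx
    · exact hx i c s hcs hcx rfl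
  · simpa only [(γ i).source] using isArc_image_uIcc (hγ i) hs

lemma exists_isGreatest_of_isRamificationPoint_pathFan [T2Space α] (hγ : ∀ i, Injective (γ i))
    {x : α} (hx : IsRamificationPoint (pathFan γ) x) :
    ∃ i j, ∃ a, IsGreatest (γ i ⁻¹' range (γ j)) a ∧ γ i a = x := by
  obtain ⟨u, hu, v, hv, huv, hup, hvp⟩ := hx.exists_not_sameArcComponent p
  obtain ⟨i, a, s, has, rfl, rfl⟩ := exists_lt_of_not_sameArcComponent_apex hγ hu hup
  obtain ⟨j, b, t, hbt, hba, rfl⟩ := exists_lt_of_not_sameArcComponent_apex hγ hv hvp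
  exact ⟨i, j, a, isGreatest_preimage_range_of_not_sameArcComponent (hγ i) (hγ j)
    (range_subset_pathFan γ i) (range_subset_pathFan γ j) hba.symm has hbt hup huv, rfl⟩

lemma finite_setOf_isRamificationPoint_pathFan [Finite ι] [T2Space α]
    (hγ : ∀ i, Injective (γ i)) : {x | IsRamificationPoint (pathFan γ) x}.Finite := by
  have last_points_finite :
      (⋃ i, ⋃ j, γ i '' {a | IsGreatest (γ i ⁻¹' range (γ j)) a}).Finite :=
    finite_iUnion fun i => finite_iUnion fun j =>
      (Set.Subsingleton.finite fun _ ha _ hb => ha.unique hb).image _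
  refine last_points_finite.subset fun x hx => ?_
  obtain ⟨i, j, a, ha, hax⟩ := exists_isGreatest_of_isRamificationPoint_pathFan hγ hx
  exact mem_iUnion₂.2 ⟨i, j, a, ha, hax⟩

end PathFan

section Unicoherent

variable {α β : Type*} [TopologicalSpace α] [TopologicalSpace β]

lemma HereditarilyUnicoherent.mono {D E : Set α} (hD : HereditarilyUnicoherent D) (hED : E ⊆ D) :
    HereditarilyUnicoherent E :=
  fun Y hY => hD Y (hY.trans hED)

lemma IsContinuum.of_homeomorph {S : Set α} {T : Set β} (hT : IsContinuum T) (h : S ≃ₜ T) :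
    IsContinuum S := by
  have : CompactSpace T := isCompact_iff_compactSpace.1 hT.1
  have : ConnectedSpace T := isConnected_iff_connectedSpace.1 hT.2
  exact ⟨isCompact_iff_compactSpace.2 h.symm.compactSpace,
    isConnected_iff_connectedSpace.2 (h.symm.surjective.connectedSpace h.symm.continuous)⟩

lemma UnicoherentSet.of_homeomorph [T2Space α] {S : Set α} {T : Set β} (hS : UnicoherentSet S)
    (h : S ≃ₜ T) (hT : IsCompact T) : UnicoherentSet T := by
  intro A B hAT hBT hA hB hA_conn hB_conn hAB
  have : CompactSpace T := isCompact_iff_compactSpace.1 hT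
  let k : T → α := fun z => h.symm z
  have hk : Topology.IsClosedEmbedding k :=
    (continuous_subtype_val.comp h.symm.continuous).isClosedEmbedding
      (Subtype.val_injective.comp h.symm.injective)
  let transport : Set β → Set α := fun C => k '' (Subtype.val ⁻¹' C)
  have transport_subset : ∀ C, transport C ⊆ S := by
    rintro C _ ⟨z, -, rfl⟩
    exact (h.symm z).2
  have transport_isClosed : ∀ C, IsClosed C → IsClosed (transport C) := fun C hC =>
    hk.isClosedMap _ (hC.preimage continuous_subtype_val)
  have transport_isConnected : ∀ C ⊆ T, (IsConnected (transport C) ↔ IsConnected C) := by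
    intro C hC
    have hC' : Subtype.val '' (Subtype.val ⁻¹' C : Set T) = C := by simpa using hC
    conv_rhs => rw [← hC']
    simp only [transport, IsConnected, image_nonempty, hk.isInducing.isPreconnected_image,
      Topology.IsInducing.subtypeVal.isPreconnected_image]
  have transport_union : transport A ∪ transport B = S := by
    rw [← image_union, ← preimage_union, hAB, Subtype.coe_preimage_self, image_univ]
    exact (h.symm.surjective.range_comp Subtype.val).trans Subtype.range_val
  have hinter := hS _ _ (transport_subset A) (transport_subset B) (transport_isClosed A hA)
    (transport_isClosed B hB) ((transport_isConnected A hAT).2 hA_conn)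
    ((transport_isConnected B hBT).2 hB_conn) transport_union
  rw [← image_inter hk.injective, ← preimage_inter] at hinter
  exact (transport_isConnected _ (inter_subset_left.trans hAT)).1 hinter

end Unicoherent

section Circle

lemma mem_unitCircle_iff {z : EuclideanSpace ℝ (Fin 2)} :
    z ∈ unitCircle ↔ z 0 ^ 2 + z 1 ^ 2 = 1 := by
  rw [unitCircle, mem_sphere_zero_iff_norm, EuclideanSpace.norm_eq, Real.sqrt_eq_one]
  simp only [Real.norm_eq_abs, sq_abs, Fin.sum_univ_two]

lemma isContinuum_unitCircle : IsContinuum unitCircle :=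
  ⟨isCompact_sphere _ _, isConnected_sphere (by
    rw [← Module.finrank_eq_rank, finrank_euclideanSpace_fin]
    norm_num) 0 zero_le_one⟩

/-- A closed half of the unit circle: the upper half for `m = 1` and the lower half for `m = -1`. -/
def halfCircle (m : ℝ) : Set (EuclideanSpace ℝ (Fin 2)) := {z ∈ unitCircle | 0 ≤ m * z 1}

lemma isClosed_halfCircle (m : ℝ) : IsClosed (halfCircle m) :=
  isClosed_sphere.inter (isClosed_le continuous_const
    (by fun_prop : Continuous fun z : EuclideanSpace ℝ (Fin 2) => m * z 1))

lemma halfCircle_eq_image {m : ℝ} (hm : m ^ 2 = 1) :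
    halfCircle m = (fun t : ℝ => !₂[t, m * √(1 - t ^ 2)]) '' Icc (-1) 1 := by
  ext z
  constructor
  · rintro ⟨hz, hmz⟩
    rw [mem_unitCircle_iff] at hz
    have hsqrt : √(1 - z 0 ^ 2) = m * z 1 := by
      rw [Real.sqrt_eq_iff_mul_self_eq (by nlinarith) hmz]
      linear_combination -z 1 ^ 2 * hm - hz
    refine ⟨z 0, abs_le.1 (abs_le_one_iff_mul_self_le_one.2 (by nlinarith)), ?_⟩
    ext i
    fin_cases i
    · simp
    · simp [hsqrt, ← mul_assoc, ← pow_two, hm]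
  · rintro ⟨t, ht, rfl⟩
    have ht' : 0 ≤ 1 - t ^ 2 := by nlinarith [ht.1, ht.2]
    refine ⟨mem_unitCircle_iff.2 ?_, ?_⟩
    · simp [mul_pow, hm, Real.sq_sqrt ht']
    · simp [← mul_assoc, ← pow_two, hm]

lemma isConnected_halfCircle {m : ℝ} (hm : m ^ 2 = 1) : IsConnected (halfCircle m) := by
  rw [halfCircle_eq_image hm]
  exact (isConnected_Icc (by norm_num)).image _ (by fun_prop)

lemma halfCircle_union_halfCircle_neg (m : ℝ) :
    halfCircle m ∪ halfCircle (-m) = unitCircle := by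
  ext z
  simp only [halfCircle, mem_union, mem_sep_iff, neg_mul, neg_nonneg, ← and_or_left, le_total,
    and_true]

lemma halfCircle_inter_halfCircle_neg {m : ℝ} (hm : m ≠ 0) :
    halfCircle m ∩ halfCircle (-m) = {!₂[1, 0], !₂[-1, 0]} := by
  ext z
  have hz : z ∈ halfCircle m ∩ halfCircle (-m) ↔ z 0 ^ 2 = 1 ∧ z 1 = 0 := by
    simp only [halfCircle, mem_inter_iff, mem_ofPred_eq, mem_unitCircle_iff, neg_mul, neg_nonneg]
    constructor
    · rintro ⟨⟨hz, h⟩, -, h'⟩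
      have : z 1 = 0 := (mul_eq_zero.1 (le_antisymm h' h)).resolve_left hm
      simp_all
    · rintro ⟨h0, h1⟩
      simp [h0, h1]
  simp only [hz, sq_eq_one_iff, mem_insert_iff, mem_singleton_iff, PiLp.ext_iff, Fin.forall_fin_two]
  simp [or_and_right]

lemma not_unicoherentSet_unitCircle : ¬ UnicoherentSet unitCircle := by
  intro h
  have hunion := halfCircle_union_halfCircle_neg 1
  have hinter := h (halfCircle 1) (halfCircle (-1)) (sep_subset _ _) (sep_subset _ _)
    (isClosed_halfCircle 1) (isClosed_halfCircle (-1)) (isConnected_halfCircle (by norm_num))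
    (isConnected_halfCircle (by norm_num)) hunion
  rw [halfCircle_inter_halfCircle_neg one_ne_zero] at hinter
  have hne : (!₂[1, 0] : EuclideanSpace ℝ (Fin 2)) ≠ !₂[-1, 0] := fun h => by
    have := congrArg (fun z : EuclideanSpace ℝ (Fin 2) => z 0) h
    norm_num at this
  exact hinter.isPreconnected.infinite_of_nontrivial (nontrivial_pair hne) (toFinite _)

lemma HereditarilyUnicoherent.isEmpty_homeomorph_unitCircle {α : Type*} [TopologicalSpace α]
    [T2Space α] {S : Set α} (hS : HereditarilyUnicoherent S) : IsEmpty (S ≃ₜ unitCircle) :=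
  ⟨fun h => not_unicoherentSet_unitCircle <|
    (hS S subset_rfl (isContinuum_unitCircle.of_homeomorph h)).of_homeomorph h
      isContinuum_unitCircle.1⟩

end Circle

section Dendroid

lemma HereditarilyUnicoherent.isTreeContinuum_pathFan {α ι : Type*} [TopologicalSpace α]
    [T2Space α] [Finite ι] {p : α} {q : ι → α} {γ : ∀ i, Path p (q i)}
    (h : HereditarilyUnicoherent (pathFan γ)) (hγ : ∀ i, Injective (γ i)) :
    IsTreeContinuum (pathFan γ) :=
  ⟨⟨isContinuum_pathFan γ, locallyConnectedSpace_pathFan γ,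
    fun _ hS => (h.mono hS).isEmpty_homeomorph_unitCircle⟩,
    finite_setOf_isRamificationPoint_pathFan hγ⟩

lemma hausdorffDist_le_of_subset_of_subset_biUnion_ball {α : Type*} [PseudoMetricSpace α]
    {D E t : Set α} {r : ℝ} (hr : 0 ≤ r) (hED : E ⊆ D) (htE : t ⊆ E)
    (hD : D ⊆ ⋃ y ∈ t, ball y r) : hausdorffDist E D ≤ r := by
  refine hausdorffDist_le_of_mem_dist hr (fun x hx => ⟨x, hED hx, by simpa using hr⟩) ?_
  intro x hx
  obtain ⟨y, hy, hxy⟩ := mem_iUnion₂.1 (hD hx)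
  exact ⟨y, htE hy, (mem_ball.1 hxy).le⟩

lemma ArcwiseConnectedSet.exists_pathFan {α : Type*} [TopologicalSpace α] {D t : Set α} {p : α}
    (hD : ArcwiseConnectedSet D) (hp : p ∈ D) (ht : t ⊆ D) :
    ∃ γ : ∀ q : (t \ {p} : Set α), Path p q,
      (∀ q, Injective (γ q)) ∧ pathFan γ ⊆ D ∧ t ⊆ pathFan γ := by
  have exists_path : ∀ q : (t \ {p} : Set α), ∃ γ : Path p q, Injective γ ∧ range γ ⊆ D := by
    rintro ⟨q, hqt, hqp⟩
    obtain ⟨A, hAD, hA⟩ := hD p hp q (ht hqt) (Ne.symm hqp)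
    obtain ⟨γ, hγ, rfl⟩ := isArc_iff_exists_path.1 hA
    exact ⟨γ, hγ, hAD⟩
  choose γ γ_inj γ_subset using exists_path
  refine ⟨γ, γ_inj, pathFan_subset hp γ_subset, fun y hy => ?_⟩
  rcases eq_or_ne y p with rfl | hyp
  · exact mem_insert _ _
  · exact range_subset_pathFan γ ⟨y, hy, hyp⟩ (γ ⟨y, hy, hyp⟩).target_mem_range

theorem dendroid_star_includes_tree_general {α : Type*} [MetricSpace α] {D : Set α}
    (hD : IsDendroid D) {ε : ℝ} (hε : 0 < ε) :
    ∃ E : Set α, IsTreeContinuum E ∧ E ⊆ D ∧ hausdorffDist E D < ε := by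
  obtain ⟨⟨D_compact, ⟨p, hp⟩, -⟩, D_arcwise, D_unicoherent⟩ := hD
  obtain ⟨t, htD, t_finite, D_cover⟩ := D_compact.finite_cover_balls (half_pos hε)
  obtain ⟨γ, γ_inj, fan_subset, t_subset⟩ := D_arcwise.exists_pathFan hp htD
  have : Finite (t \ {p} : Set α) := t_finite.sdiff
  exact ⟨pathFan γ, (D_unicoherent.mono fan_subset).isTreeContinuum_pathFan γ_inj, fan_subset,
    (hausdorffDist_le_of_subset_of_subset_biUnion_ball (half_pos hε).le fan_subset t_subset
      D_cover).trans_lt (half_lt_self hε)⟩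

end Dendroid

theorem dendroid_star_includes_tree (n : ℕ) (D : Set (EuclideanSpace ℝ (Fin n)))
    (hD : IsDendroid D) (ε : ℝ) (hε : 0 < ε) :
    ∃ E : Set (EuclideanSpace ℝ (Fin n)), IsTreeContinuum E ∧ E ⊆ D ∧
      Metric.hausdorffDist E D < ε :=
  dendroid_star_includes_tree_general hD hε
end

section
/- There exists a computable closed set D ⊆ ℝ² which is a dendrite and which does not *-include a Π⁰₁ tree: there is a real ε > 0 such that every Π⁰₁ closed set T ⊆ D which is a tree (as a continuum) satisfies d_H(T, D) ≥ ε. -/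
open Set Metric

/-!
Over each of the disjoint intervals `(1 / 2 ^ (n + 1), 1 / 2 ^ n)` erect on the segment `[-1, 1]` a
spike whose tip has rational coordinates and whose base has width proportional to a real
`w n ∈ [0, 1]`; the result is a curve with monotone abscissa, hence a dendrite. For a recursively
enumerable `p`, one can choose `w` uniformly computable with `0 < w n` exactly when `p n`, which
makes the dendrite a computable closed set.

Let `T` be a subcontinuum that reaches far enough to both sides. If `p n` holds, then `T` can only
get past the `n`-th spike by climbing it, so it contains the tip. If `p n` fails, then the spike is
a vertical segment, and `T` ramifies at its foot as soon as it contains the tip. So if `T` is a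
tree, then up to finitely many `n` the condition `¬p n` says that the tip of the `n`-th spike is
not in `T`. If moreover `T` is `Π⁰₁`, this makes `¬p` recursively enumerable, which is impossible
if `p` is the halting problem.
-/

/-! ### Computability of rational arithmetic -/

section RationalComputability

open Encodable Denumerable

theorem computable_subtype_ofNat {s : Set ℕ} [Infinite s] [DecidablePred (· ∈ s)]
    (hs : ComputablePred (· ∈ s)) : Computable fun n => (Nat.Subtype.ofNat s n : ℕ) := by
  have exists_next (x : ℕ) : ∃ m, x + m + 1 ∈ s := by
    obtain ⟨y, hy, hxy⟩ := (Set.infinite_coe_iff.1 ‹Infinite s›).exists_gt x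
    exact ⟨y - x - 1, by rwa [show x + (y - x - 1) + 1 = y by omega]⟩
  have find_computable : Computable fun x => Nat.find (exists_next x) :=
    Computable.find (P := fun x m => x + m + 1 ∈ s)
      (ComputablePred.computable_iff.2 <| by
        obtain ⟨f, hf, hsf⟩ := ComputablePred.computable_iff.1 hs
        exact ⟨fun p => f (p.1 + p.2 + 1),
          hf.comp (Primrec.succ.comp Primrec.nat_add).to_comp,
          funext fun p => congrFun hsf (p.1 + p.2 + 1)⟩)
      exists_next
  have next_computable : Computable fun x => x + Nat.find (exists_next x) + 1 :=
    Computable.succ.comp (Primrec.nat_add.to_comp.comp .id find_computable)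
  refine (Computable.nat_rec (f := fun n : ℕ => n) (g := fun _ => (Nat.Subtype.ofNat s 0 : ℕ))
    (h := fun _ p => p.2 + Nat.find (exists_next p.2) + 1) .id (.const _)
    (next_computable.comp (Computable.snd.comp .snd))).of_eq fun n => ?_
  induction n with
  | zero => rfl
  | succ n ih =>
    dsimp only at ih ⊢
    simp only [ih]
    rfl

theorem computable_encode_ofNat_ofEncodableOfInfinite {α : Type*} [Encodable α] [Infinite α]
    (h : ComputablePred (· ∈ Set.range (encode : α → ℕ))) :
    Computable fun n => encode (@ofNat α (ofEncodableOfInfinite α) n) := by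
  let := decidableRangeEncode α
  have : Infinite (Set.range (encode : α → ℕ)) :=
    (Set.infinite_range_of_injective encode_injective).to_subtype
  let := Nat.Subtype.denumerable (Set.range (encode : α → ℕ))
  refine (computable_subtype_ofNat h).of_eq fun n => ?_
  have ofNat_eq : @ofNat α (ofEncodableOfInfinite α) n =
      (equivRangeEncode α).symm (ofNat (Set.range (encode : α → ℕ)) n) := ofEquiv_ofNat _ _ n
  have ofNat_range_eq : ofNat (Set.range (encode : α → ℕ)) n = Nat.Subtype.ofNat _ n :=
    ofEquiv_ofNat ℕ _ n
  rw [ofNat_eq, ofNat_range_eq]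
  exact (congrArg Subtype.val ((equivRangeEncode α).apply_symm_apply _)).symm

/-- The code of a rational as a pair (numerator, denominator) in lowest terms. The `Primcodable`
structure on `ℚ` numbers the rationals by increasing `fractionCode`. -/
def fractionCode (q : ℚ) : ℕ := Nat.pair (Equiv.intEquivNat q.num) q.den

theorem natAbs_intEquivNat_symm (e : ℕ) : (Equiv.intEquivNat.symm e).natAbs = (e + 1) / 2 := by
  obtain ⟨z, rfl⟩ := Equiv.intEquivNat.surjective e
  rw [Equiv.symm_apply_apply]
  cases z with
  | ofNat n => change n = (2 * n + 1) / 2; omega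
  | negSucc n => change n + 1 = (2 * n + 1 + 1) / 2; omega

theorem toNat_intEquivNat_symm (e : ℕ) :
    (Equiv.intEquivNat.symm e).toNat = if e % 2 = 1 then 0 else e / 2 := by
  obtain ⟨z, rfl⟩ := Equiv.intEquivNat.surjective e
  rw [Equiv.symm_apply_apply]
  cases z with
  | ofNat n => change n = if 2 * n % 2 = 1 then 0 else 2 * n / 2; grind
  | negSucc n => change 0 = if (2 * n + 1) % 2 = 1 then 0 else (2 * n + 1) / 2; grind

theorem mem_range_fractionCode {m : ℕ} : m ∈ Set.range fractionCode ↔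
    0 < m.unpair.2 ∧
      ∀ d < m.unpair.2 + 1, d = 1 ∨ ¬((m.unpair.1 + 1) / 2 % d = 0 ∧ m.unpair.2 % d = 0) := by
  constructor
  · rintro ⟨q, rfl⟩
    rw [fractionCode, Nat.unpair_pair, ← natAbs_intEquivNat_symm, Equiv.symm_apply_apply]
    refine ⟨q.den_pos, fun d _ => or_iff_not_imp_right.2 fun h => ?_⟩
    obtain ⟨hnum, hden⟩ := not_not.1 h
    exact Nat.eq_one_of_dvd_coprimes q.reduced (Nat.dvd_of_mod_eq_zero hnum)
      (Nat.dvd_of_mod_eq_zero hden)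
  · rintro ⟨hpos, h⟩
    rw [← natAbs_intEquivNat_symm] at h
    have coprime : (Equiv.intEquivNat.symm m.unpair.1).natAbs.Coprime m.unpair.2 :=
      (h _ (Nat.lt_succ_of_le (Nat.gcd_le_right _ hpos))).resolve_right fun h =>
        h ⟨Nat.mod_eq_zero_of_dvd (Nat.gcd_dvd_left _ _),
          Nat.mod_eq_zero_of_dvd (Nat.gcd_dvd_right _ _)⟩
    exact ⟨⟨_, _, hpos.ne', coprime⟩, by simp [fractionCode]⟩

theorem primrecPred_mem_range_fractionCode :
    PrimrecPred fun m => m ∈ Set.range fractionCode := by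
  have mod_eq_zero {f g : ℕ × ℕ × ℕ → ℕ} (hf : Primrec f) (hg : Primrec g) :
      PrimrecPred fun x => f x % g x = 0 :=
    Primrec.eq.comp (Primrec.nat_mod.comp hf hg) (.const 0)
  have no_common_divisor :
      PrimrecRel fun (d : ℕ) (x : ℕ × ℕ) => d = 1 ∨ ¬(x.1 % d = 0 ∧ x.2 % d = 0) :=
    PrimrecPred.or (Primrec.eq.comp .fst (.const 1)) (PrimrecPred.not (PrimrecPred.and
      (mod_eq_zero (Primrec.fst.comp .snd) .fst) (mod_eq_zero (Primrec.snd.comp .snd) .fst)))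
  have den : Primrec fun m : ℕ => m.unpair.2 := Primrec.snd.comp .unpair
  have num_natAbs : Primrec fun m : ℕ => (m.unpair.1 + 1) / 2 :=
    Primrec.nat_div.comp (Primrec.succ.comp (Primrec.fst.comp .unpair)) (.const 2)
  refine ((Primrec.nat_lt.comp (.const 0) den).and (no_common_divisor.forall_mem_list.comp
    (Primrec.list_range.comp (Primrec.succ.comp den)) (num_natAbs.pair den))).of_eq fun m => ?_
  simp only [mem_range_fractionCode, List.mem_range, Nat.succ_eq_add_one]

theorem computable_fractionCode : Computable fractionCode := by
  have enumeration : Computable fun n => fractionCode (@ofNat ℚ Rat.instDenumerable n) :=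
    @computable_encode_ofNat_ofEncodableOfInfinite ℚ Rat.instEncodable _
      primrecPred_mem_range_fractionCode.computablePred
  exact (enumeration.comp Computable.encode).of_eq fun q => by rw [ofNat_encode]

theorem computable_rat_den : Computable fun q : ℚ => q.den :=
  (Computable.snd.comp (Computable.unpair.comp computable_fractionCode)).of_eq fun q => by
    rw [fractionCode, Nat.unpair_pair]

theorem computable_rat_num_toNat : Computable fun q : ℚ => q.num.toNat := by
  have toNat_primrec : Primrec fun e : ℕ => if e % 2 = 1 then 0 else e / 2 :=
    Primrec.ite (Primrec.eq.comp (Primrec.nat_mod.comp .id (.const 2)) (.const 1)) (.const 0)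
      (Primrec.nat_div.comp .id (.const 2))
  refine (toNat_primrec.to_comp.comp
    (Computable.fst.comp (Computable.unpair.comp computable_fractionCode))).of_eq fun q => ?_
  rw [← toNat_intEquivNat_symm, fractionCode, Nat.unpair_pair, Equiv.symm_apply_apply]

theorem computable_rat_neg_num_toNat : Computable fun q : ℚ => (-q.num).toNat := by
  have natAbs_primrec : Primrec fun e : ℕ => (e + 1) / 2 :=
    Primrec.nat_div.comp Primrec.succ (.const 2)
  refine (Primrec.nat_sub.to_comp.comp (natAbs_primrec.to_comp.comp
    (Computable.fst.comp (Computable.unpair.comp computable_fractionCode)))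
    computable_rat_num_toNat).of_eq fun q => ?_
  rw [← natAbs_intEquivNat_symm, fractionCode, Nat.unpair_pair, Equiv.symm_apply_apply]
  omega

theorem rat_mul_den_eq_toNat_sub_toNat (q : ℚ) :
    q * q.den = (q.num.toNat : ℚ) - (-q.num).toNat := by
  rw [Rat.mul_den_eq_num]
  exact_mod_cast (Int.toNat_sub_toNat_neg q.num).symm

variable {α : Type*} [Primcodable α]

theorem computable_of_computable_graph {β : Type*} [Denumerable β] {f : α → β}
    {P : α → β → Bool} (hP : Computable₂ P) (hfP : ∀ a b, P a b ↔ f a = b) : Computable f := by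
  have exists_code (a : α) : ∃ n, P a (ofNat β n) := ⟨encode (f a), by simp [hfP]⟩
  have find_computable : Computable fun a => Nat.find (exists_code a) :=
    Computable.find (P := fun a n => P a (ofNat β n) = true)
      (Computable.computablePred <|
        (hP.comp Computable.fst ((Computable.ofNat β).comp .snd)).of_eq fun _ => by simp)
      exists_code
  exact ((Computable.ofNat β).comp find_computable).of_eq fun a =>
    ((hfP _ _).1 (Nat.find_spec (exists_code a))).symm

theorem computable_nat_add_mul {a b c d : α → ℕ} (ha : Computable a) (hb : Computable b)
    (hc : Computable c) (hd : Computable d) : Computable fun x => a x * b x + c x * d x :=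
  Primrec.nat_add.to_comp.comp (Primrec.nat_mul.to_comp.comp ha hb)
    (Primrec.nat_mul.to_comp.comp hc hd)

theorem computable_of_mul_eq_sub {f : α → ℚ} {a b d : α → ℕ} (ha : Computable a)
    (hb : Computable b) (hd : Computable d) (hd0 : ∀ x, d x ≠ 0)
    (hf : ∀ x, f x * d x = a x - b x) : Computable f := by
  refine computable_of_computable_graph (P := fun x q => decide
    (q.num.toNat * d x + b x * q.den = (-q.num).toNat * d x + a x * q.den))
    (Primrec.eq.decide.to_comp.comp
      (computable_nat_add_mul (computable_rat_num_toNat.comp .snd) (hd.comp .fst)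
        (hb.comp .fst) (computable_rat_den.comp .snd))
      (computable_nat_add_mul (computable_rat_neg_num_toNat.comp .snd) (hd.comp .fst)
        (ha.comp .fst) (computable_rat_den.comp .snd))) fun x q => ?_
  have hq := rat_mul_den_eq_toNat_sub_toNat q
  have hden : (d x : ℚ) * q.den ≠ 0 := mul_ne_zero (mod_cast hd0 x) (mod_cast q.den_ne_zero)
  rw [decide_eq_true_eq, ← mul_left_inj' hden, ← Nat.cast_inj (R := ℚ)]
  push_cast
  constructor <;> intro h
  · linear_combination q.den * hf x - d x * hq - h
  · linear_combination q.den * hf x - d x * hq - h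

theorem computable₂_rat_add : Computable₂ ((· + ·) : ℚ → ℚ → ℚ) := by
  have den₁ := computable_rat_den.comp (Computable.fst : Computable (Prod.fst : ℚ × ℚ → ℚ))
  have den₂ := computable_rat_den.comp (Computable.snd : Computable (Prod.snd : ℚ × ℚ → ℚ))
  refine computable_of_mul_eq_sub
    (computable_nat_add_mul (computable_rat_num_toNat.comp .fst) den₂
      (computable_rat_num_toNat.comp .snd) den₁)
    (computable_nat_add_mul (computable_rat_neg_num_toNat.comp .fst) den₂
      (computable_rat_neg_num_toNat.comp .snd) den₁)
    (Primrec.nat_mul.to_comp.comp den₁ den₂) (by simp) fun ⟨p, q⟩ => ?_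
  push_cast
  linear_combination q.den * rat_mul_den_eq_toNat_sub_toNat p +
    p.den * rat_mul_den_eq_toNat_sub_toNat q

theorem computable₂_rat_mul : Computable₂ ((· * ·) : ℚ → ℚ → ℚ) := by
  have pos₁ := computable_rat_num_toNat.comp (Computable.fst : Computable (Prod.fst : ℚ × ℚ → ℚ))
  have pos₂ := computable_rat_num_toNat.comp (Computable.snd : Computable (Prod.snd : ℚ × ℚ → ℚ))
  have neg₁ := computable_rat_neg_num_toNat.comp
    (Computable.fst : Computable (Prod.fst : ℚ × ℚ → ℚ))
  have neg₂ := computable_rat_neg_num_toNat.comp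
    (Computable.snd : Computable (Prod.snd : ℚ × ℚ → ℚ))
  refine computable_of_mul_eq_sub (computable_nat_add_mul pos₁ pos₂ neg₁ neg₂)
    (computable_nat_add_mul pos₁ neg₂ neg₁ pos₂)
    (Primrec.nat_mul.to_comp.comp (computable_rat_den.comp .fst) (computable_rat_den.comp .snd))
    (by simp) fun ⟨p, q⟩ => ?_
  push_cast
  linear_combination q * q.den * rat_mul_den_eq_toNat_sub_toNat p +
    (p.num.toNat - (-p.num).toNat : ℚ) * rat_mul_den_eq_toNat_sub_toNat q

theorem computable_rat_neg : Computable (Neg.neg : ℚ → ℚ) :=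
  (computable₂_rat_mul.comp (.const (-1)) .id).of_eq fun q => neg_one_mul q

theorem computable₂_rat_sub : Computable₂ ((· - ·) : ℚ → ℚ → ℚ) :=
  (computable₂_rat_add.comp .fst (computable_rat_neg.comp .snd)).of_eq fun p =>
    (sub_eq_add_neg p.1 p.2).symm

theorem computable₂_rat_lt : Computable₂ fun p q : ℚ => decide (p < q) :=
  (Primrec.nat_lt.decide.to_comp.comp (.const 0) (computable_rat_num_toNat.comp
    (computable₂_rat_sub.comp .snd .fst))).of_eq fun p => by simp

theorem computable₂_rat_max : Computable₂ (max : ℚ → ℚ → ℚ) :=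
  (Computable.cond computable₂_rat_lt .snd .fst).of_eq fun p => by
    simp [max_def_lt, Bool.cond_decide]

theorem computable₂_rat_min : Computable₂ (min : ℚ → ℚ → ℚ) :=
  (Computable.cond computable₂_rat_lt .fst .snd).of_eq fun p => by
    simp [min_def_lt, Bool.cond_decide]

theorem computable_rat_abs : Computable (abs : ℚ → ℚ) :=
  computable₂_rat_max.comp .id computable_rat_neg

theorem computable_rat_sum_range {k : α → ℕ} {f : α → ℕ → ℚ} (hk : Computable k)
    (hf : Computable₂ f) : Computable fun a => ∑ i ∈ Finset.range (k a), f a i := by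
  refine (Computable.nat_rec (f := k) (g := fun _ => (0 : ℚ)) (h := fun a p => p.2 + f a p.1) hk
    (.const _) (computable₂_rat_add.comp (Computable.snd.comp .snd)
      (hf.comp .fst (Computable.fst.comp .snd)))).of_eq fun a => ?_
  dsimp only
  induction k a with
  | zero => simp
  | succ n ih => simp only [ih, Finset.sum_range_succ]

theorem computable_rat_natCast : Computable (Nat.cast : ℕ → ℚ) :=
  (computable_rat_sum_range (f := fun _ _ => 1) .id (.const 1)).of_eq fun n => by simp

theorem computable_rat_pow (c : ℚ) : Computable fun n : ℕ => c ^ n := by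
  refine (Computable.nat_rec (f := fun n : ℕ => n) (g := fun _ => (1 : ℚ))
    (h := fun _ p => p.2 * c) .id (.const _)
    (computable₂_rat_mul.comp (Computable.snd.comp .snd) (.const c))).of_eq fun n => ?_
  induction n with
  | zero => simp
  | succ n ih => simp only [ih, pow_succ]

end RationalComputability

/-! ### Recursively enumerable predicates -/

section RecursivelyEnumerable

variable {α β : Type*} [Primcodable α] [Primcodable β]

theorem computable_decide_forall_lt {k : α → ℕ} {P : α → ℕ → Bool} (hk : Computable k)
    (hP : Computable₂ P) : Computable fun a => decide (∀ i < k a, P a i) := by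
  refine (Computable.nat_rec (f := k) (g := fun _ => true) (h := fun a p => p.2 && P a p.1) hk
    (.const _) (Primrec.and.to_comp.comp (Computable.snd.comp .snd)
      (hP.comp .fst (Computable.fst.comp .snd)))).of_eq fun a => ?_
  dsimp only
  induction k a with
  | zero => simp
  | succ n ih => simp only [ih, Nat.forall_lt_succ_right, Bool.decide_and, Bool.decide_eq_true]

theorem rePred_exists_nat {P : α → ℕ → Bool} (hP : Computable₂ P) :
    REPred fun a => ∃ n, P a n :=
  (Partrec.rfind hP.partrec₂).dom_re.of_eq fun a => by simp [Nat.rfind_dom, eq_comm (a := true)]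

theorem rePred_iff_exists_computable₂ {p : α → Prop} :
    REPred p ↔ ∃ R : α → ℕ → Bool, Computable₂ R ∧ ∀ a, p a ↔ ∃ k, R a k := by
  refine ⟨fun hp => ?_, fun ⟨R, hR, hpR⟩ => (rePred_exists_nat hR).of_eq fun a => (hpR a).symm⟩
  obtain ⟨c, hc⟩ := Nat.Partrec.Code.exists_code.1 hp
  refine ⟨fun a k => (Nat.Partrec.Code.evaln k c (Encodable.encode a)).isSome,
    Primrec.option_isSome.to_comp.comp (Nat.Partrec.Code.primrec_evaln.to_comp.comp
      ((Computable.snd.pair (.const c)).pair (Computable.encode.comp .fst))), fun a => ?_⟩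
  have dom_iff : p a ↔ (Nat.Partrec.Code.eval c (Encodable.encode a)).Dom := by
    simp [hc, Part.assert]
  simp only [dom_iff, Part.dom_iff_mem, Nat.Partrec.Code.evaln_complete,
    Option.isSome_iff_exists]
  exact exists_comm

theorem rePred_exists {p : α → β → Prop} (hp : REPred fun x : α × β => p x.1 x.2) :
    REPred fun a => ∃ b, p a b := by
  obtain ⟨R, hR, hpR⟩ := rePred_iff_exists_computable₂.1 hp
  have hdecode : Computable fun x : α × ℕ => (Encodable.decode x.2.unpair.1 : Option β) :=
    Computable.decode.comp (Computable.fst.comp (Computable.unpair.comp .snd))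
  have hsearch : Computable₂ fun (a : α) (n : ℕ) =>
      Option.casesOn (motive := fun _ => Bool) (Encodable.decode n.unpair.1 : Option β) false
        fun b => R (a, b) n.unpair.2 :=
    Computable.option_casesOn hdecode (.const false) (hR.comp
      ((Computable.fst.comp .fst).pair .snd)
      (Computable.snd.comp (Computable.unpair.comp (Computable.snd.comp .fst))))
  refine (rePred_exists_nat hsearch).of_eq fun a => ⟨fun ⟨n, hn⟩ => ?_, fun ⟨b, hb⟩ => ?_⟩
  · cases hb : (Encodable.decode n.unpair.1 : Option β) with
    | none => simp [hb] at hn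
    | some b => exact ⟨b, (hpR (a, b)).2 ⟨n.unpair.2, by simpa [hb] using hn⟩⟩
  · obtain ⟨k, hk⟩ := (hpR (a, b)).1 hb
    exact ⟨Nat.pair (Encodable.encode b) k, by simpa using hk⟩

theorem rePred_and {p q : α → Prop} (hp : REPred p) (hq : REPred q) :
    REPred fun a => p a ∧ q a := by
  obtain ⟨R, hR, hpR⟩ := rePred_iff_exists_computable₂.1 hp
  obtain ⟨S, hS, hqS⟩ := rePred_iff_exists_computable₂.1 hq
  have hRS : ComputablePred fun x : α × ℕ × ℕ => (R x.1 x.2.1 && S x.1 x.2.2) = true :=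
    Computable.computablePred <| (Primrec.and.to_comp.comp
      (hR.comp .fst (Computable.fst.comp .snd)) (hS.comp .fst (Computable.snd.comp .snd))).of_eq
        fun x => by simp
  refine (rePred_exists (p := fun a (x : ℕ × ℕ) => (R a x.1 && S a x.2) = true) hRS.to_re).of_eq
    fun a => ?_
  simp only [hpR, hqS, Prod.exists, Bool.and_eq_true, exists_and_left, exists_and_right]

theorem rePred_or {p q : α → Prop} (hp : REPred p) (hq : REPred q) :
    REPred fun a => p a ∨ q a := by
  obtain ⟨R, hR, hpR⟩ := rePred_iff_exists_computable₂.1 hp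
  obtain ⟨S, hS, hqS⟩ := rePred_iff_exists_computable₂.1 hq
  refine (rePred_exists_nat (P := fun a k => R a k || S a k)
    (Primrec.or.to_comp.comp hR hS)).of_eq fun a => ?_
  simp only [hpR, hqS, Bool.or_eq_true, exists_or]

theorem primrecPred_mem_of_finite {s : Set α} (hs : s.Finite) : PrimrecPred (· ∈ s) := by
  induction s, hs using Set.Finite.induction_on with
  | empty => exact PrimrecPred.of_eq (Primrec.eq.comp (.const 0) (.const 1)) (by simp)
  | @insert a s _ _ ih => exact (Primrec.eq.comp .id (.const a)).or ih

theorem real_ofDigits_pos_iff {b : ℕ} {d : ℕ → Fin b} :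
    0 < Real.ofDigits d ↔ ∃ k, (d k : ℕ) ≠ 0 := by
  refine ⟨fun h => ?_, fun ⟨k, hk⟩ => ?_⟩
  · by_contra! hd
    simp [Real.ofDigits, Real.ofDigitsTerm, hd] at h
  · have hb : 0 < b := (d k).pos
    refine Real.summable_ofDigitsTerm.tsum_pos (fun _ => Real.ofDigitsTerm_nonneg) k ?_
    rw [Real.ofDigitsTerm]
    positivity

theorem exists_real_pos_iff_of_rePred {p : α → Prop} (hp : REPred p) :
    ∃ (w : α → ℝ) (q : α → ℕ → ℚ), Computable₂ q ∧ (∀ a, w a ∈ Icc (0 : ℝ) 1) ∧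
      (∀ a s, |w a - q a s| ≤ (1 / 2) ^ s) ∧ ∀ a, 0 < w a ↔ p a := by
  obtain ⟨R, hR, hpR⟩ := rePred_iff_exists_computable₂.1 hp
  let d (a : α) (k : ℕ) : Fin 2 := bif R a k then 1 else 0
  let q (a : α) (s : ℕ) : ℚ := ∑ k ∈ Finset.range s, bif R a k then (1 / 2) ^ (k + 1) else 0
  have hterm (a : α) (k : ℕ) :
      Real.ofDigitsTerm (d a) k = ((bif R a k then (1 / 2) ^ (k + 1) else 0 : ℚ) : ℝ) := by
    cases h : R a k <;> simp [Real.ofDigitsTerm, d, h]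
  refine ⟨fun a => Real.ofDigits (d a), q, ?_,
    fun a => ⟨Real.ofDigits_nonneg _, Real.ofDigits_le_one _⟩, fun a s => ?_, fun a => ?_⟩
  · exact computable_rat_sum_range (α := α × ℕ) .snd (Computable.cond
      (hR.comp (Computable.fst.comp .fst) .snd) ((computable_rat_pow _).comp
        (Computable.succ.comp .snd)) (.const 0))
  · dsimp only
    have hq : (q a s : ℝ) = ∑ k ∈ Finset.range s, Real.ofDigitsTerm (d a) k := by
      simp only [q, Rat.cast_sum, hterm]
    rw [hq, Real.ofDigits_eq_sum_add_ofDigits (d a) s, add_sub_cancel_left,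
      abs_of_nonneg (mul_nonneg (by positivity) (Real.ofDigits_nonneg _)), one_div_pow, one_div]
    exact mul_le_of_le_one_right (by positivity) (Real.ofDigits_le_one _)
  · rw [hpR, real_ofDigits_pos_iff]
    refine exists_congr fun k => ?_
    cases h : R a k <;> simp [d, h]

theorem exists_rePred_nat_not_rePred_not : ∃ p : ℕ → Prop, REPred p ∧ ¬REPred fun n => ¬p n := by
  refine ⟨fun n => ((Denumerable.ofNat Nat.Partrec.Code n).eval 0).Dom,
    Partrec.comp (ComputablePred.halting_problem_re 0) (Computable.ofNat Nat.Partrec.Code),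
    fun h => ?_⟩
  have hcode : REPred fun c : Nat.Partrec.Code =>
      ¬((Denumerable.ofNat Nat.Partrec.Code (Encodable.encode c)).eval 0).Dom :=
    Partrec.comp h Computable.encode
  simp only [Denumerable.ofNat_encode] at hcode
  exact ComputablePred.halting_problem_not_re 0 hcode

end RecursivelyEnumerable

/-! ### Computable closed sets from rational nets -/

section ComputableNet

open Filter Topology

/-- The point of the real plane with the given rational coordinates. -/
def ratPoint (p : ℚ × ℚ) : ℝ × ℝ := (p.1, p.2)

/-- The distance between two rational points of the plane, as a rational number. -/
def ratDist (p q : ℚ × ℚ) : ℚ := max |p.1 - q.1| |p.2 - q.2|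

theorem ratCast_ratDist (p q : ℚ × ℚ) : (ratDist p q : ℝ) = dist (ratPoint p) (ratPoint q) := by
  simp only [ratDist, ratPoint, Prod.dist_eq, Real.dist_eq]
  push_cast
  rfl

theorem mem_ballOfCode {x : ℝ × ℝ} {c : (ℚ × ℚ) × ℚ} :
    x ∈ ballOfCode c ↔ dist x (ratPoint c.1) < c.2 := Iff.rfl

theorem computable₂_ratDist : Computable₂ ratDist :=
  computable₂_rat_max.comp
    (computable_rat_abs.comp (computable₂_rat_sub.comp (Computable.fst.comp .fst)
      (Computable.fst.comp .snd)))
    (computable_rat_abs.comp (computable₂_rat_sub.comp (Computable.snd.comp .fst)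
      (Computable.snd.comp .snd)))

theorem denseRange_ratPoint : DenseRange ratPoint :=
  Rat.isDenseEmbedding_coe_real.dense.prodMap Rat.isDenseEmbedding_coe_real.dense

theorem rePred_ratPoint_notMem {α : Type*} [Primcodable α] {T : Set (ℝ × ℝ)}
    (hT : IsPi01Closed T) {q : α → ℚ × ℚ} (hq : Computable q) :
    REPred fun a => ratPoint (q a) ∉ T := by
  obtain ⟨W, hW, rfl⟩ := hT
  have hW' : REPred fun x : α × ((ℚ × ℚ) × ℚ) => W x.2 := Partrec.comp hW .snd
  have hball : ComputablePred fun x : α × ((ℚ × ℚ) × ℚ) => ratDist (q x.1) x.2.1 < x.2.2 :=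
    Computable.computablePred <| computable₂_rat_lt.comp
      (computable₂_ratDist.comp (hq.comp .fst) (Computable.fst.comp .snd))
      (Computable.snd.comp .snd)
  refine (rePred_exists (p := fun a c => W c ∧ ratDist (q a) c.1 < c.2)
    (rePred_and hW' hball.to_re)).of_eq fun a => ?_
  simp [mem_ballOfCode, ← ratCast_ratDist]

/-- The points `Q s i` with `i < N s` form an `ε s`-net of `D` and lie within `ε s` of `D`; all data
are computable and the errors `ε s` tend to `0`. -/
structure IsComputableNet (D : Set (ℝ × ℝ)) (N : ℕ → ℕ) (Q : ℕ → ℕ → ℚ × ℚ) (ε : ℕ → ℚ) :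
    Prop where
  computable_card : Computable N
  computable_point : Computable₂ Q
  computable_error : Computable ε
  tendsto_error : Tendsto (fun s => (ε s : ℝ)) atTop (𝓝 0)
  exists_mem_dist_le : ∀ s, ∀ i < N s, ∃ x ∈ D, dist x (ratPoint (Q s i)) ≤ ε s
  exists_point_dist_le : ∀ s, ∀ x ∈ D, ∃ i < N s, dist x (ratPoint (Q s i)) ≤ ε s

namespace IsComputableNet

variable {D : Set (ℝ × ℝ)} {N : ℕ → ℕ} {Q : ℕ → ℕ → ℚ × ℚ} {ε : ℕ → ℚ}

theorem exists_error_lt (h : IsComputableNet D N Q ε) {δ : ℝ} (hδ : 0 < δ) : ∃ s, ε s < δ :=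
  (h.tendsto_error.eventually_lt_const hδ).exists

theorem rePred_ball_disjoint_net (h : IsComputableNet D N Q ε) :
    REPred fun c : (ℚ × ℚ) × ℚ => ∃ s, ∀ i < N s, c.2 + ε s ≤ ratDist (Q s i) c.1 := by
  have hfar : Computable₂ fun (x : ((ℚ × ℚ) × ℚ) × ℕ) (i : ℕ) =>
      !decide (ratDist (Q x.2 i) x.1.1 < x.1.2 + ε x.2) :=
    Primrec.not.to_comp.comp (computable₂_rat_lt.comp
      (computable₂_ratDist.comp (h.computable_point.comp (Computable.snd.comp .fst) .snd)
        (Computable.fst.comp (Computable.fst.comp .fst)))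
      (computable₂_rat_add.comp (Computable.snd.comp (Computable.fst.comp .fst))
        (h.computable_error.comp (Computable.snd.comp .fst))))
  have hall := computable_decide_forall_lt (h.computable_card.comp .snd) hfar
  exact (rePred_exists_nat hall.to₂).of_eq fun c => by simp

theorem rePred_net_meets_ball (h : IsComputableNet D N Q ε) :
    REPred fun c : (ℚ × ℚ) × ℚ => ∃ x : ℕ × ℕ,
      x.2 < N x.1 ∧ ratDist (Q x.1 x.2) c.1 + ε x.1 < c.2 := by
  have hindex : ComputablePred fun x : ((ℚ × ℚ) × ℚ) × ℕ × ℕ => x.2.2 < N x.2.1 :=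
    Computable.computablePred <| Primrec.nat_lt.decide.to_comp.comp (Computable.snd.comp .snd)
      (h.computable_card.comp (Computable.fst.comp .snd))
  have hnear : ComputablePred fun x : ((ℚ × ℚ) × ℚ) × ℕ × ℕ =>
      ratDist (Q x.2.1 x.2.2) x.1.1 + ε x.2.1 < x.1.2 :=
    Computable.computablePred <| computable₂_rat_lt.comp
      (computable₂_rat_add.comp
        (computable₂_ratDist.comp
          (h.computable_point.comp (Computable.fst.comp .snd) (Computable.snd.comp .snd))
          (Computable.fst.comp .fst))
        (h.computable_error.comp (Computable.fst.comp .snd)))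
      (Computable.snd.comp .fst)
  exact rePred_exists (rePred_and hindex.to_re hnear.to_re)

theorem isPi01Closed (h : IsComputableNet D N Q ε) (hD : IsClosed D) : IsPi01Closed D := by
  refine ⟨_, h.rePred_ball_disjoint_net, Set.ext fun x => ?_⟩
  simp only [Set.mem_sdiff, Set.mem_univ, true_and, Set.mem_iUnion, Set.mem_ofPred_eq,
    not_exists, mem_ballOfCode, ← Rat.cast_le (K := ℝ), Rat.cast_add, ratCast_ratDist]
  constructor
  · rintro hx c ⟨s, hs⟩ hxc
    obtain ⟨i, hi, hxi⟩ := h.exists_point_dist_le s x hx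
    linarith [hs i hi, dist_triangle_left (ratPoint (Q s i)) (ratPoint c.1) x]
  · intro hballs
    by_contra hx
    obtain ⟨ρ, hρ, hball⟩ := Metric.isOpen_iff.1 hD.isOpen_compl x hx
    obtain ⟨s, hs⟩ := h.exists_error_lt (δ := ρ / 4) (by positivity)
    obtain ⟨r, hr0, hr⟩ := exists_rat_btwn (show 0 < ρ / 4 by positivity)
    obtain ⟨p, hp⟩ := denseRange_ratPoint.exists_dist_lt x hr0
    refine hballs (p, r) ⟨s, fun i hi => ?_⟩ hp
    obtain ⟨y, hy, hyi⟩ := h.exists_mem_dist_le s i hi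
    have hxy : ρ ≤ dist y x := not_lt.1 fun hlt => hball hlt hy
    have := dist_triangle4 y (ratPoint (Q s i)) (ratPoint p) x
    rw [dist_comm (ratPoint p) x] at this
    linarith

theorem isCEClosed (h : IsComputableNet D N Q ε) : IsCEClosed D := by
  refine h.rePred_net_meets_ball.of_eq fun c => ?_
  simp only [← Rat.cast_lt (K := ℝ), Rat.cast_add, ratCast_ratDist]
  constructor
  · rintro ⟨⟨s, i⟩, hi, hball⟩
    obtain ⟨x, hx, hxi⟩ := h.exists_mem_dist_le s i hi
    refine ⟨x, hx, mem_ballOfCode.2 ?_⟩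
    linarith [dist_triangle x (ratPoint (Q s i)) (ratPoint c.1)]
  · rintro ⟨x, hx, hxc⟩
    rw [mem_ballOfCode] at hxc
    obtain ⟨s, hs⟩ := h.exists_error_lt (δ := (c.2 - dist x (ratPoint c.1)) / 2) (by linarith)
    obtain ⟨i, hi, hxi⟩ := h.exists_point_dist_le s x hx
    refine ⟨(s, i), hi, ?_⟩
    dsimp only
    linarith [dist_triangle_left (ratPoint (Q s i)) (ratPoint c.1) x]

theorem isComputableClosed (h : IsComputableNet D N Q ε) (hD : IsClosed D) :
    IsComputableClosed D :=
  ⟨h.isPi01Closed hD, h.isCEClosed⟩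

end IsComputableNet

theorem exists_nat_le_abs_sub_grid_le {a b t : ℝ} (ht : t ∈ Icc a b) {m : ℕ} (hm : 0 < m) :
    ∃ i ≤ m, |t - (a + (b - a) * i / m)| ≤ (b - a) / m := by
  have hm' : (0 : ℝ) < m := mod_cast hm
  rcases (ht.1.trans ht.2).eq_or_lt with rfl | hab
  · exact ⟨0, m.zero_le, by simp [le_antisymm ht.2 ht.1]⟩
  set u := (t - a) / (b - a) * m with hu
  have hba : 0 < b - a := sub_pos.2 hab
  have hu0 : 0 ≤ u := by have := sub_nonneg.2 ht.1; positivity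
  refine ⟨⌊u⌋₊, ?_, ?_⟩
  · refine Nat.floor_le_of_le (mul_le_of_le_one_left hm'.le ?_)
    rw [div_le_one hba]
    linarith [ht.2]
  · have ht_eq : t = a + (b - a) * u / m := by rw [hu]; field_simp; ring
    have hsub : t - (a + (b - a) * ⌊u⌋₊ / m) = (b - a) / m * (u - ⌊u⌋₊) := by
      rw [ht_eq]; ring
    rw [hsub, abs_of_nonneg (mul_nonneg (by positivity) (sub_nonneg.2 (Nat.floor_le hu0)))]
    exact mul_le_of_le_one_right (by positivity) (by linarith [Nat.lt_floor_add_one u])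

theorem computable₂_comp_rat_grid {P : ℕ → ℚ → ℚ × ℚ} (hP : Computable₂ P) (a b : ℚ) :
    Computable₂ fun s i : ℕ => P s (a + (b - a) * i / (2 ^ s : ℕ)) := by
  have hstep : Computable₂ fun s i : ℕ => (b - a) * (i : ℚ) * (1 / 2) ^ s :=
    computable₂_rat_mul.comp
      (computable₂_rat_mul.comp (.const (b - a)) (computable_rat_natCast.comp .snd))
      ((computable_rat_pow (1 / 2)).comp .fst)
  refine (hP.comp .fst (computable₂_rat_add.comp (.const a) hstep)).of_eq fun x => ?_
  simp [div_eq_mul_inv]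

theorem grid_mem_Icc {a b : ℝ} (hab : a ≤ b) {i m : ℕ} (hi : i ≤ m) :
    a + (b - a) * i / m ∈ Icc a b := by
  rw [mul_div_assoc]
  have hle : (i : ℝ) / m ≤ 1 := div_le_one_of_le₀ (mod_cast hi) m.cast_nonneg
  constructor <;> nlinarith [sub_nonneg.2 hab, show (0 : ℝ) ≤ i / m by positivity]

theorem isComputableNet_image_Icc {γ : ℝ → ℝ × ℝ} {K : ℕ} (hγ : LipschitzWith K γ)
    {P : ℕ → ℚ → ℚ × ℚ} (hP : Computable₂ P)
    (happrox : ∀ s (t : ℚ), dist (γ t) (ratPoint (P s t)) ≤ (1 / 2) ^ s) {a b : ℚ}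
    (hab : a ≤ b) : IsComputableNet (γ '' Icc (a : ℝ) b) (fun s => 2 ^ s + 1)
      (fun s i => P s (a + (b - a) * i / (2 ^ s : ℕ)))
      (fun s => (K * (b - a) + 1) * (1 / 2) ^ s) := by
  have hab' : (a : ℝ) ≤ b := mod_cast hab
  refine ⟨?_, computable₂_comp_rat_grid hP a b, ?_, ?_, fun s i hi => ?_, ?_⟩
  · exact (Primrec.succ.comp
      ((Primrec₂.unpaired'.1 Nat.Primrec.pow).comp (.const 2) .id)).to_comp
  · exact computable₂_rat_mul.comp (.const _) (computable_rat_pow _)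
  · push_cast
    simpa using (tendsto_pow_atTop_nhds_zero_of_lt_one (by norm_num : (0 : ℝ) ≤ 1 / 2)
      (by norm_num)).const_mul (K * (b - a) + 1 : ℝ)
  · refine ⟨_, mem_image_of_mem γ (x := ((a + (b - a) * i / (2 ^ s : ℕ) : ℚ) : ℝ)) ?_,
      (happrox _ _).trans ?_⟩
    · exact_mod_cast grid_mem_Icc hab' (Nat.lt_succ_iff.1 hi)
    · push_cast
      exact le_mul_of_one_le_left (by positivity)
        (by linarith [mul_nonneg (K.cast_nonneg (α := ℝ)) (sub_nonneg.2 hab')])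
  · rintro s _ ⟨t, ht, rfl⟩
    obtain ⟨i, hi, hti⟩ := exists_nat_le_abs_sub_grid_le ht (Nat.two_pow_pos s)
    refine ⟨i, Nat.lt_succ_of_le hi, ?_⟩
    set t' : ℚ := a + (b - a) * i / (2 ^ s : ℕ) with ht'
    calc dist (γ t) (ratPoint (P s t'))
        ≤ dist (γ t) (γ t') + dist (γ t') (ratPoint (P s t')) := dist_triangle _ _ _
      _ ≤ K * ((b - a) / (2 ^ s : ℕ)) + (1 / 2) ^ s := by
        refine add_le_add ((hγ.dist_le_mul _ _).trans ?_) (happrox s t')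
        gcongr
        · simp
        · rw [ht', Real.dist_eq]
          exact_mod_cast hti
      _ = ((K * (b - a) + 1) * (1 / 2) ^ s : ℚ) := by
        push_cast
        rw [one_div, inv_pow]
        ring

theorem isComputableClosed_image_Icc {γ : ℝ → ℝ × ℝ} {K : ℕ} (hγ : LipschitzWith K γ)
    {P : ℕ → ℚ → ℚ × ℚ} (hP : Computable₂ P)
    (happrox : ∀ s (t : ℚ), dist (γ t) (ratPoint (P s t)) ≤ (1 / 2) ^ s) {a b : ℚ}
    (hab : a ≤ b) : IsComputableClosed (γ '' Icc (a : ℝ) b) :=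
  (isComputableNet_image_Icc hγ hP happrox hab).isComputableClosed
    (isCompact_Icc.image hγ.continuous).isClosed

end ComputableNet

/-! ### Dendrites from curves with monotone abscissa -/

section MonotoneCurve

theorem isPreconnected_compl_singleton_unitCircle (v : unitCircle) :
    IsPreconnected ({v}ᶜ : Set unitCircle) := by
  have hv : ‖(v : EuclideanSpace ℝ (Fin 2))‖ = 1 := norm_eq_of_mem_sphere v
  exact range_stereographic_symm hv v.2 ▸
    isPreconnected_range (isOpenEmbedding_stereographic_symm hv).continuous

theorem preconnectedSpace_unitCircle : PreconnectedSpace unitCircle :=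
  Subtype.preconnectedSpace <| isPreconnected_sphere
    (by rw [← Module.finrank_eq_rank, finrank_euclideanSpace_fin]; norm_num) 0 1

theorem nontrivial_unitCircle : Nontrivial unitCircle := by
  let v : sphere (0 : EuclideanSpace ℝ (Fin 2)) 1 := ⟨EuclideanSpace.single 0 1, by simp⟩
  exact ⟨v, (-v :), ne_neg_of_mem_unit_sphere ℝ v⟩

theorem exists_ne_apply_eq_of_unitCircle {φ : unitCircle → ℝ} (hφ : Continuous φ)
    {u v : unitCircle} {c : ℝ} (hu : φ u < c) (hv : c < φ v) :
    ∃ s s', s ≠ s' ∧ φ s = c ∧ φ s' = c := by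
  have := preconnectedSpace_unitCircle
  obtain ⟨s, hs⟩ := mem_range_of_exists_le_of_exists_ge hφ ⟨u, hu.le⟩ ⟨v, hv.le⟩
  obtain ⟨s', hs's, hs'⟩ := (isPreconnected_compl_singleton_unitCircle s).intermediate_value
    (a := u) (b := v) (by rintro rfl; exact hu.ne hs) (by rintro rfl; exact hv.ne' hs)
    hφ.continuousOn ⟨hu.le, hv.le⟩
  exact ⟨s, s', Ne.symm hs's, hs, hs'⟩

variable {f g : ℝ → ℝ}

theorem not_injective_of_unitCircle_of_monotone (hf : Monotone f) {ι : unitCircle → ℝ × ℝ}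
    (hι : Continuous ι) (hιfg : ∀ v, ∃ t, (f t, g t) = ι v) : ¬Function.Injective ι := by
  intro hinj
  -- A monotone function takes all but countably many values only once.
  have fst_eq (u v : unitCircle) : (ι u).1 = (ι v).1 := by
    by_contra hne
    wlog huv : (ι u).1 < (ι v).1 generalizing u v
    · exact this v u (Ne.symm hne) (lt_or_gt_of_ne hne |>.resolve_left huv)
    obtain ⟨c, hc, huc, hcv⟩ :=
      (hf.countable_setOfPred_two_preimages.dense_compl ℝ).exists_between huv
    obtain ⟨s, s', hss', hs, hs'⟩ := exists_ne_apply_eq_of_unitCircle hι.fst huc hcv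
    obtain ⟨t, ht⟩ := hιfg s
    obtain ⟨t', ht'⟩ := hιfg s'
    have hne : t ≠ t' := fun h => hss' (hinj (by rw [← ht, ← ht', h]))
    have hft : f t = c := by rw [← hs, ← ht]
    have hft' : f t' = c := by rw [← hs', ← ht']
    rcases hne.lt_or_gt with h | h
    exacts [hc ⟨t, t', h, hft, hft'⟩, hc ⟨t', t, h, hft', hft⟩]
  have snd_eq (u v : unitCircle) : (ι u).2 = (ι v).2 := by
    by_contra hne
    wlog huv : (ι u).2 < (ι v).2 generalizing u v
    · exact this v u (Ne.symm hne) (lt_or_gt_of_ne hne |>.resolve_left huv)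
    obtain ⟨c, huc, hcv⟩ := exists_between huv
    obtain ⟨s, s', hss', hs, hs'⟩ := exists_ne_apply_eq_of_unitCircle hι.snd huc hcv
    exact hss' (hinj (Prod.ext (fst_eq s s') (hs.trans hs'.symm)))
  obtain ⟨u, v, huv⟩ := nontrivial_unitCircle
  exact huv (hinj (Prod.ext (fst_eq u v) (snd_eq u v)))

theorem locallyConnectedSpace_image_Icc {X : Type*} [TopologicalSpace X] [T2Space X]
    {γ : ℝ → X} (hγ : Continuous γ) {a b : ℝ} (hab : a ≤ b) :
    LocallyConnectedSpace (γ '' Icc a b) := by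
  have : LocallyConnectedSpace (Icc a b) :=
    (isQuotientMap_projIcc (h := hab)).isCoinducing.locallyConnectedSpace
  let φ : Icc a b → γ '' Icc a b := (mapsTo_image γ (Icc a b)).restrict
  have hφ : Continuous φ := hγ.restrict (mapsTo_image γ (Icc a b))
  have hφs : Function.Surjective φ := (MapsTo.restrict_surjective_iff _).2 (surjOn_image γ _)
  exact (hφ.isClosedMap.isQuotientMap hφ hφs).isCoinducing.locallyConnectedSpace

theorem isDendrite_image_Icc_of_monotone (hf : Monotone f) (hfc : Continuous f)
    (hg : Continuous g) {a b : ℝ} (hab : a ≤ b) :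
    IsDendrite ((fun t => (f t, g t)) '' Icc a b) := by
  have hγ : Continuous fun t => (f t, g t) := hfc.prodMk hg
  refine ⟨⟨isCompact_Icc.image hγ, (isConnected_Icc hab).image _ hγ.continuousOn⟩,
    locallyConnectedSpace_image_Icc hγ hab, fun S hS => ⟨fun e => ?_⟩⟩
  refine not_injective_of_unitCircle_of_monotone (g := g) hf
    (continuous_subtype_val.comp e.symm.continuous) (fun v => ?_)
    (Subtype.val_injective.comp e.symm.injective)
  obtain ⟨t, -, ht⟩ := hS (e.symm v).2
  exact ⟨t, ht⟩

end MonotoneCurve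

/-! ### Sums of functions with disjoint supports -/

section DisjointSupport

theorem abs_add_abs_le_of_disjoint_support {K : NNReal} {f g : ℝ → ℝ} (hf : LipschitzWith K f)
    (hg : LipschitzWith K g) (hfg : Disjoint (Function.support f) (Function.support g)) {x y : ℝ}
    (hx : g x = 0) (hy : f y = 0) : |f x| + |g y| ≤ K * |x - y| := by
  obtain ⟨z, hz, hfgz⟩ : (0 : ℝ) ∈ (fun t => |f t| - |g t|) '' uIcc x y := by
    refine intermediate_value_uIcc
      (hf.continuous.abs.sub hg.continuous.abs).continuousOn ?_
    simp [hx, hy, uIcc_comm |f x|, mem_uIcc]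
  have hz0 : f z = 0 ∧ g z = 0 := by
    have habs : |f z| = |g z| := sub_eq_zero.1 hfgz
    by_contra hne
    have hfz : f z ≠ 0 := fun h => hne ⟨h, abs_eq_zero.1 (by rw [← habs, h, abs_zero])⟩
    exact Set.disjoint_left.1 hfg hfz (abs_ne_zero.1 (habs ▸ abs_ne_zero.2 hfz))
  calc |f x| + |g y| = dist (f x) (f z) + dist (g z) (g y) := by
        rw [hz0.1, hz0.2, Real.dist_0_eq_abs, dist_comm, Real.dist_0_eq_abs]
    _ ≤ K * dist x z + K * dist z y := add_le_add (hf.dist_le_mul _ _) (hg.dist_le_mul _ _)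
    _ = K * |x - y| := by
        rw [← mul_add, dist_add_dist_of_mem_segment (segment_eq_uIcc x y ▸ hz), Real.dist_eq]

theorem exists_tsum_eq_of_disjoint_support {ι X : Type*} [Nonempty ι] {f : ι → X → ℝ}
    (hdisj : Pairwise (Function.onFun Disjoint fun i => Function.support (f i))) (x : X) :
    ∃ i, ∑' j, f j x = f i x ∧ ∀ j ≠ i, f j x = 0 := by
  by_cases hx : ∃ i, f i x ≠ 0
  · obtain ⟨i, hi⟩ := hx
    have hzero (j : ι) (hj : j ≠ i) : f j x = 0 := by
      by_contra hne
      exact Set.disjoint_left.1 (hdisj hj) hne hi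
    exact ⟨i, tsum_eq_single i hzero, hzero⟩
  · push Not at hx
    exact ⟨Classical.arbitrary ι, by simp [hx], fun j _ => hx j⟩

theorem lipschitzWith_tsum_of_disjoint_support {ι : Type*} {K : NNReal} {f : ι → ℝ → ℝ}
    (hf : ∀ i, LipschitzWith K (f i))
    (hdisj : Pairwise (Function.onFun Disjoint fun i => Function.support (f i))) :
    LipschitzWith K fun t => ∑' i, f i t := by
  rcases isEmpty_or_nonempty ι with _ | _
  · simpa using LipschitzWith.const' 0
  refine LipschitzWith.of_dist_le_mul fun x y => ?_
  obtain ⟨i, hxi, hxi'⟩ := exists_tsum_eq_of_disjoint_support hdisj x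
  obtain ⟨j, hyj, hyj'⟩ := exists_tsum_eq_of_disjoint_support hdisj y
  rw [hxi, hyj]
  rcases eq_or_ne i j with rfl | hij
  · exact (hf i).dist_le_mul x y
  · calc dist (f i x) (f j y) ≤ |f i x| + |f j y| := abs_sub _ _
      _ ≤ K * |x - y| :=
        abs_add_abs_le_of_disjoint_support (hf i) (hf j) (hdisj hij) (hxi' j hij.symm) (hyj' i hij)

end DisjointSupport

/-! ### Tiling the unit interval by rescaled profiles -/

section Tile

section Profile

variable {F : Type*} [Field F] [LinearOrder F]

/-- The graph of `tent` is a spike over `[-1/2, 1/2]`. -/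
def tent (u : F) : F := max 0 (1 / 2 - |u|)

/-- The piecewise linear function vanishing off `[-1, 1]` with slope `-1` on `[-1/2, 1/2]` and
slope `1` elsewhere on `[-1, 1]`. Thus `u + (1 - w) * zigzag u` increases with slope `w` over the
base of the spike of `tent`, which it collapses to a point if `w = 0`. -/
def zigzag (u : F) : F := min (max (1 + u) 0) (max (-u) (min (u - 1) 0))

/-- The profile `φ`, which is thought of as living on `(-1, 1)`, moved to
`(1 / 2 ^ (n + 1), 1 / 2 ^ n)` and rescaled accordingly. -/
def tile (φ : F → F) (n : ℕ) (t : F) : F := (1 / 2) ^ (n + 2) * φ (2 ^ (n + 2) * t - 3)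

end Profile

theorem ratCast_tent (u : ℚ) : ((tent u : ℚ) : ℝ) = tent (u : ℝ) := by
  simp [tent]

theorem ratCast_zigzag (u : ℚ) : ((zigzag u : ℚ) : ℝ) = zigzag (u : ℝ) := by
  simp [zigzag]

theorem ratCast_tile {φ : ℚ → ℚ} {ψ : ℝ → ℝ} (h : ∀ u, (φ u : ℝ) = ψ u) (n : ℕ) (t : ℚ) :
    ((tile φ n t : ℚ) : ℝ) = tile ψ n t := by
  simp [tile, h]

theorem computable_tent : Computable (tent : ℚ → ℚ) :=
  computable₂_rat_max.comp (.const 0) (computable₂_rat_sub.comp (.const _) computable_rat_abs)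

theorem computable_zigzag : Computable (zigzag : ℚ → ℚ) :=
  computable₂_rat_min.comp
    (computable₂_rat_max.comp (computable₂_rat_add.comp (.const 1) .id) (.const 0))
    (computable₂_rat_max.comp computable_rat_neg
      (computable₂_rat_min.comp (computable₂_rat_sub.comp .id (.const 1)) (.const 0)))

theorem computable₂_tile {φ : ℚ → ℚ} (hφ : Computable φ) : Computable₂ (tile φ) := by
  have hpow (c : ℚ) : Computable fun x : ℕ × ℚ => c ^ (x.1 + 2) :=
    (computable_rat_pow c).comp (Primrec.nat_add.to_comp.comp .fst (.const 2))
  exact computable₂_rat_mul.comp (hpow _) (hφ.comp (computable₂_rat_sub.comp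
    (computable₂_rat_mul.comp (hpow 2) .snd) (.const 3)))

/-- The open interval carrying the `n`-th tile. -/
def tileInterval (n : ℕ) : Set ℝ := Ioo ((1 / 2) ^ (n + 1)) ((1 / 2) ^ n)

/-- The midpoint of `tileInterval n`. -/
noncomputable def tileCenter (n : ℕ) : ℝ := 3 * (1 / 2) ^ (n + 2)

theorem two_pow_mul_half_pow (n : ℕ) : (2 : ℝ) ^ n * (1 / 2) ^ n = 1 := by
  rw [← mul_pow]; norm_num

theorem mem_tileInterval_iff {n : ℕ} {t : ℝ} :
    t ∈ tileInterval n ↔ |2 ^ (n + 2) * t - 3| < 1 := by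
  have h2 : (0 : ℝ) < 2 ^ (n + 2) := by positivity
  have hhalf : ((1 : ℝ) / 2) ^ (n + 1) = 2 / 2 ^ (n + 2) ∧
      ((1 : ℝ) / 2) ^ n = 4 / 2 ^ (n + 2) := by
    constructor <;> · rw [one_div_pow]; field_simp; ring
  rw [tileInterval, Set.mem_Ioo, hhalf.1, hhalf.2, div_lt_iff₀' h2, lt_div_iff₀' h2, abs_lt]
  constructor <;> rintro ⟨h, h'⟩ <;> constructor <;> linarith

theorem tileCenter_mem_tileInterval (n : ℕ) : tileCenter n ∈ tileInterval n := by
  rw [mem_tileInterval_iff, tileCenter, mul_left_comm, two_pow_mul_half_pow]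
  norm_num

theorem pairwise_disjoint_tileInterval : Pairwise (Function.onFun Disjoint tileInterval) :=
  (pow_right_anti₀ (by norm_num) (by norm_num) :
    Antitone fun n => ((1 : ℝ) / 2) ^ n).pairwise_disjoint_on_Ioo_succ

theorem tileCenter_injective : Function.Injective tileCenter := fun m n h =>
  pairwise_disjoint_tileInterval.eq <| Set.not_disjoint_iff.2
    ⟨_, tileCenter_mem_tileInterval m, h ▸ tileCenter_mem_tileInterval n⟩

theorem tileCenter_le_three_quarters (n : ℕ) : tileCenter n ≤ 3 / 4 := by
  have h : ((1 : ℝ) / 2) ^ (n + 2) ≤ (1 / 2) ^ 2 :=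
    pow_le_pow_of_le_one (by norm_num) (by norm_num) (Nat.le_add_left 2 n)
  rw [tileCenter]
  linarith

theorem pos_of_mem_tileInterval {n : ℕ} {t : ℝ} (ht : t ∈ tileInterval n) : 0 < t :=
  lt_trans (by positivity) ht.1

theorem half_pow_notMem_tileInterval (k n : ℕ) : ((1 : ℝ) / 2) ^ k ∉ tileInterval n := by
  rintro ⟨hl, hr⟩
  rw [pow_lt_pow_iff_right_of_lt_one₀ (by norm_num) (by norm_num)] at hl hr
  omega

/-- A profile that tiles to a Lipschitz function: it is `1`-Lipschitz and carried by `(-1, 1)`. -/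
structure IsTileProfile (φ : ℝ → ℝ) : Prop where
  lipschitz : LipschitzWith 1 φ
  eq_zero_of_one_le_abs : ∀ u, 1 ≤ |u| → φ u = 0

theorem isTileProfile_tent : IsTileProfile tent where
  lipschitz := by
    have habs : LipschitzWith 1 fun u : ℝ => 1 / 2 - |u| :=
      LipschitzWith.of_dist_le_mul fun u v => by
        simpa only [Real.dist_eq, sub_sub_sub_cancel_left, abs_sub_comm u v, NNReal.coe_one,
          one_mul] using abs_abs_sub_abs_le v u
    exact habs.const_max 0
  eq_zero_of_one_le_abs u hu := max_eq_left (by linarith)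

theorem isTileProfile_zigzag : IsTileProfile zigzag where
  lipschitz := by
    have hadd : LipschitzWith 1 fun u : ℝ => 1 + u := (isometry_add_left (1 : ℝ)).lipschitz
    have hsub : LipschitzWith 1 fun u : ℝ => u - 1 :=
      (IsometryEquiv.subRight (1 : ℝ)).isometry.lipschitz
    have hneg : LipschitzWith 1 fun u : ℝ => -u := LipschitzWith.id.neg
    have h := (hadd.max_const 0).min (hneg.max (hsub.min_const 0))
    rwa [max_self, max_self] at h
  eq_zero_of_one_le_abs u hu := by
    rcases le_abs.1 hu with h | h
    · rw [zigzag, min_eq_right (a := u - 1) (by linarith), max_eq_right (a := -u) (by linarith),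
        min_eq_right (le_max_right _ _)]
    · rw [zigzag, max_eq_right (by linarith), min_eq_left (le_max_of_le_left (by linarith))]

theorem abs_zigzag_le (u : ℝ) : |zigzag u| ≤ |u| := by
  have h := isTileProfile_zigzag.lipschitz.dist_le_mul u 0
  simpa [zigzag, Real.dist_eq] using h

theorem zigzag_eq_neg_or_tent_eq_zero (u : ℝ) : zigzag u = -u ∨ tent u = 0 := by
  rcases le_total (1 / 2) |u| with h | h
  · exact Or.inr (max_eq_left (by linarith))
  · obtain ⟨hl, hr⟩ := abs_le.1 h
    left
    rw [zigzag, max_eq_left (b := (0 : ℝ)) (by linarith), min_eq_left (b := (0 : ℝ)) (by linarith),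
      max_eq_left (by linarith), min_eq_right (by linarith)]

namespace IsTileProfile

variable {φ : ℝ → ℝ}

theorem abs_le_one (hφ : IsTileProfile φ) (u : ℝ) : |φ u| ≤ 1 := by
  rcases le_total 1 |u| with hu | hu
  · simp [hφ.eq_zero_of_one_le_abs u hu]
  have hdist (v : ℝ) (hv : 1 ≤ |v|) : |φ u| ≤ |u - v| := by
    simpa [hφ.eq_zero_of_one_le_abs v hv, Real.dist_eq] using hφ.lipschitz.dist_le_mul u v
  obtain ⟨hl, hr⟩ := abs_le.1 hu
  rcases le_total 0 u with h | h
  · exact (hdist 1 (by simp)).trans (abs_le.2 ⟨by linarith, by linarith⟩)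
  · exact (hdist (-1) (by simp)).trans (abs_le.2 ⟨by linarith, by linarith⟩)

theorem tile_eq_zero (hφ : IsTileProfile φ) {n : ℕ} {t : ℝ} (ht : t ∉ tileInterval n) :
    tile φ n t = 0 := by
  rw [mem_tileInterval_iff, not_lt] at ht
  rw [tile, hφ.eq_zero_of_one_le_abs _ ht, mul_zero]

theorem abs_tile_le (hφ : IsTileProfile φ) (n : ℕ) (t : ℝ) : |tile φ n t| ≤ (1 / 2) ^ n := by
  rw [tile, abs_mul, abs_of_pos (by positivity)]
  exact (mul_le_of_le_one_right (by positivity) (hφ.abs_le_one _)).trans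
    (pow_le_pow_of_le_one (by norm_num) (by norm_num) (Nat.le_add_right n 2))

theorem lipschitzWith_tile (hφ : IsTileProfile φ) (n : ℕ) : LipschitzWith 1 (tile φ n) := by
  refine LipschitzWith.of_dist_le_mul fun x y => ?_
  have h := hφ.lipschitz.dist_le_mul (2 ^ (n + 2) * x - 3) (2 ^ (n + 2) * y - 3)
  rw [dist_sub_right, NNReal.coe_one, one_mul] at *
  calc dist (tile φ n x) (tile φ n y)
      = (1 / 2) ^ (n + 2) * dist (φ (2 ^ (n + 2) * x - 3)) (φ (2 ^ (n + 2) * y - 3)) := by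
        simp only [tile, Real.dist_eq, ← mul_sub, abs_mul, abs_of_pos (show
          (0 : ℝ) < (1 / 2) ^ (n + 2) by positivity)]
    _ ≤ (1 / 2) ^ (n + 2) * dist (2 ^ (n + 2) * x) (2 ^ (n + 2) * y) := by gcongr
    _ = dist x y := by
        rw [Real.dist_eq, ← mul_sub, abs_mul, abs_of_pos (by positivity), ← mul_assoc,
          mul_comm (_ ^ _), two_pow_mul_half_pow, one_mul, Real.dist_eq]

end IsTileProfile

/-- The function that is `b n` times the rescaled profile `φ` on `tileInterval n` for every `n`,
and vanishes elsewhere. -/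
noncomputable def tiledSum (φ : ℝ → ℝ) (b : ℕ → ℝ) (t : ℝ) : ℝ := ∑' n, b n * tile φ n t

namespace IsTileProfile

variable {φ : ℝ → ℝ} {b : ℕ → ℝ}

theorem tiledSum_of_mem (hφ : IsTileProfile φ) {n : ℕ} {t : ℝ} (ht : t ∈ tileInterval n) :
    tiledSum φ b t = b n * tile φ n t :=
  tsum_eq_single n fun m hm => by
    rw [hφ.tile_eq_zero (Set.disjoint_right.1 (pairwise_disjoint_tileInterval hm) ht), mul_zero]

theorem tiledSum_of_forall_notMem (hφ : IsTileProfile φ) {t : ℝ} (ht : ∀ n, t ∉ tileInterval n) :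
    tiledSum φ b t = 0 := by
  simp only [tiledSum, hφ.tile_eq_zero (ht _), mul_zero, tsum_zero]

theorem lipschitzWith_tiledSum (hφ : IsTileProfile φ) (hb : ∀ n, |b n| ≤ 1) :
    LipschitzWith 1 (tiledSum φ b) := by
  refine lipschitzWith_tsum_of_disjoint_support (fun n => ?_) fun m n hmn => ?_
  · refine LipschitzWith.of_dist_le_mul fun x y => ?_
    rw [Real.dist_eq, ← mul_sub, abs_mul]
    have htile : |tile φ n x - tile φ n y| ≤ dist x y := by
      simpa [Real.dist_eq] using (hφ.lipschitzWith_tile n).dist_le_mul x y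
    exact mul_le_mul (hb n) htile (abs_nonneg _) zero_le_one
  · have hsupp (k : ℕ) : Function.support (fun t => b k * tile φ k t) ⊆ tileInterval k :=
      Function.support_subset_iff'.2 fun t ht => by rw [hφ.tile_eq_zero ht, mul_zero]
    exact (pairwise_disjoint_tileInterval hmn).mono (hsupp m) (hsupp n)

theorem abs_tiledSum_sub_sum_le (hφ : IsTileProfile φ) (hb : ∀ n, |b n| ≤ 1) {s : ℕ} {q : ℕ → ℝ}
    (hq : ∀ n, |b n - q n| ≤ (1 / 2) ^ s) (t : ℝ) :
    |tiledSum φ b t - ∑ n ∈ Finset.range s, q n * tile φ n t| ≤ (1 / 2) ^ s := by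
  by_cases ht : ∃ m, t ∈ tileInterval m
  · obtain ⟨m, hm⟩ := ht
    have hother (n : ℕ) (hn : n ≠ m) : q n * tile φ n t = 0 := by
      rw [hφ.tile_eq_zero (Set.disjoint_right.1 (pairwise_disjoint_tileInterval hn) hm), mul_zero]
    rw [hφ.tiledSum_of_mem hm]
    rcases lt_or_ge m s with hms | hms
    · rw [Finset.sum_eq_single_of_mem m (Finset.mem_range.2 hms) fun n _ => hother n, ← sub_mul,
        abs_mul]
      exact (mul_le_of_le_one_right (abs_nonneg _) <| (hφ.abs_tile_le m t).trans <|
        pow_le_one₀ (by norm_num) (by norm_num)).trans (hq m)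
    · rw [Finset.sum_eq_zero fun n hn => hother n (by grind), sub_zero, abs_mul]
      exact (mul_le_of_le_one_left (abs_nonneg _) (hb m)).trans <| (hφ.abs_tile_le m t).trans
        (pow_le_pow_of_le_one (by norm_num) (by norm_num) hms)
  · push Not at ht
    simp [hφ.tiledSum_of_forall_notMem ht, hφ.tile_eq_zero (ht _)]

end IsTileProfile

theorem computable₂_sum_tile {φ : ℚ → ℚ} (hφ : Computable φ) {q : ℕ → ℕ → ℚ}
    (hq : Computable₂ q) :
    Computable₂ fun (s : ℕ) (t : ℚ) => ∑ n ∈ Finset.range s, q n s * tile φ n t :=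
  computable_rat_sum_range (α := ℕ × ℚ) .fst <| computable₂_rat_mul.comp
    (hq.comp .snd (Computable.fst.comp .fst))
    ((computable₂_tile hφ).comp .snd (Computable.snd.comp .fst))

end Tile

/-! ### The spike curve -/

section SpikeCurve

/-- The first coordinate of the spike curve: it increases, with slope `w n` over the base of the
`n`-th spike. -/
noncomputable def spikeAbscissa (w : ℕ → ℝ) (t : ℝ) : ℝ := t + tiledSum zigzag (fun n => 1 - w n) t

/-- The second coordinate of the spike curve. -/
noncomputable def spikeOrdinate (t : ℝ) : ℝ := tiledSum tent (fun _ => 1) t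

/-- The interval `[-1, 1]` with a spike of width proportional to `w n` erected over
`tileInterval n`, for every `n`. The `n`-th spike is a vertical segment meeting the interval at
the point `(tileCenter n, 0)` if `w n = 0`. -/
def spikeDendrite (w : ℕ → ℝ) : Set (ℝ × ℝ) :=
  (fun t => (spikeAbscissa w t, spikeOrdinate t)) '' Icc (-1) 1

/-- The tip of the `n`-th spike. -/
def spikeTip (n : ℕ) : ℚ × ℚ := (3 * (1 / 2) ^ (n + 2), (1 / 2) ^ (n + 3))

theorem ratPoint_spikeTip (n : ℕ) : ratPoint (spikeTip n) = (tileCenter n, (1 / 2) ^ (n + 3)) := by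
  simp [ratPoint, spikeTip, tileCenter]

theorem computable_spikeTip : Computable spikeTip :=
  have hpow (k : ℕ) : Computable fun n : ℕ => ((1 : ℚ) / 2) ^ (n + k) :=
    (computable_rat_pow _).comp (Primrec.nat_add.to_comp.comp .id (.const k))
  (computable₂_rat_mul.comp (.const 3) (hpow 2)).pair (hpow 3)

/-- The approximation to the spike curve by its first `s` spikes, whose widths `w n` are replaced
by rational approximations `q n s`. -/
def spikeCurveApprox (q : ℕ → ℕ → ℚ) (s : ℕ) (t : ℚ) : ℚ × ℚ :=
  (t + ∑ n ∈ Finset.range s, (1 - q n s) * tile zigzag n t,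
    ∑ n ∈ Finset.range s, 1 * tile tent n t)

theorem computable₂_spikeCurveApprox {q : ℕ → ℕ → ℚ} (hq : Computable₂ q) :
    Computable₂ (spikeCurveApprox q) := by
  have hslope : Computable₂ fun n s => 1 - q n s := computable₂_rat_sub.comp (.const 1) hq
  have hone : Computable₂ fun _ _ : ℕ => (1 : ℚ) := .const 1
  have hzigzag := computable₂_sum_tile computable_zigzag hslope
  have htent := computable₂_sum_tile computable_tent hone
  exact (Computable₂.comp computable₂_rat_add Computable.snd hzigzag).pair htent

variable {w : ℕ → ℝ} {n : ℕ} {t : ℝ}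

theorem spikeAbscissa_of_forall_notMem (ht : ∀ n, t ∉ tileInterval n) : spikeAbscissa w t = t := by
  rw [spikeAbscissa, isTileProfile_zigzag.tiledSum_of_forall_notMem ht, add_zero]

theorem spikeAbscissa_neg_one : spikeAbscissa w (-1) = -1 :=
  spikeAbscissa_of_forall_notMem fun _ h => by linarith [pos_of_mem_tileInterval h]

theorem spikeAbscissa_half_pow (k : ℕ) : spikeAbscissa w ((1 / 2) ^ k) = (1 / 2) ^ k :=
  spikeAbscissa_of_forall_notMem (half_pow_notMem_tileInterval k)

theorem spikeAbscissa_one : spikeAbscissa w 1 = 1 := by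
  simpa using spikeAbscissa_half_pow (w := w) 0

theorem spikeAbscissa_sub_tileCenter (ht : t ∈ tileInterval n) :
    spikeAbscissa w t - tileCenter n = (1 / 2) ^ (n + 2) *
      ((2 ^ (n + 2) * t - 3) + (1 - w n) * zigzag (2 ^ (n + 2) * t - 3)) := by
  rw [spikeAbscissa, isTileProfile_zigzag.tiledSum_of_mem ht, tile, tileCenter]
  linear_combination -t * two_pow_mul_half_pow (n + 2)

theorem spikeOrdinate_of_mem (ht : t ∈ tileInterval n) :
    spikeOrdinate t = (1 / 2) ^ (n + 2) * tent (2 ^ (n + 2) * t - 3) := by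
  rw [spikeOrdinate, isTileProfile_tent.tiledSum_of_mem ht, one_mul, tile]

theorem spikeOrdinate_tileCenter : spikeOrdinate (tileCenter n) = (1 / 2) ^ (n + 3) := by
  rw [spikeOrdinate_of_mem (tileCenter_mem_tileInterval n), tileCenter, mul_left_comm,
    two_pow_mul_half_pow]
  norm_num [tent, pow_succ]

theorem spikeOrdinate_nonneg (t : ℝ) : 0 ≤ spikeOrdinate t :=
  tsum_nonneg fun n => mul_nonneg zero_le_one <|
    mul_nonneg (by positivity) (le_max_left _ _)

theorem lipschitzWith_spikeOrdinate : LipschitzWith 1 spikeOrdinate :=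
  isTileProfile_tent.lipschitzWith_tiledSum fun _ => by simp

section Width

variable (hw : ∀ n, w n ∈ Icc (0 : ℝ) 1)

include hw

theorem abs_one_sub_width_le_one (n : ℕ) : |1 - w n| ≤ 1 :=
  abs_le.2 ⟨by linarith [(hw n).2], by linarith [(hw n).1]⟩

theorem lipschitzWith_spikeAbscissa : LipschitzWith 2 (spikeAbscissa w) := by
  have h := LipschitzWith.id.add
    (isTileProfile_zigzag.lipschitzWith_tiledSum (abs_one_sub_width_le_one hw))
  rwa [one_add_one_eq_two] at h

theorem monotone_spikeAbscissa : Monotone (spikeAbscissa w) := by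
  intro x y hxy
  have h := (isTileProfile_zigzag.lipschitzWith_tiledSum
    (abs_one_sub_width_le_one hw)).dist_le_mul x y
  rw [Real.dist_eq, Real.dist_eq, abs_sub_comm x, abs_of_nonneg (sub_nonneg.2 hxy),
    NNReal.coe_one, one_mul] at h
  linarith [(abs_le.1 h).2, spikeAbscissa.eq_def w x, spikeAbscissa.eq_def w y]

theorem mem_tileInterval_of_spikeAbscissa_mem (ht : spikeAbscissa w t ∈ tileInterval n) :
    t ∈ tileInterval n := by
  have hmono := monotone_spikeAbscissa hw
  refine ⟨hmono.reflect_lt ?_, hmono.reflect_lt ?_⟩ <;> rw [spikeAbscissa_half_pow]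
  exacts [ht.1, ht.2]

theorem eq_tileCenter_of_spikeAbscissa_eq (hn : 0 < w n) (ht : spikeAbscissa w t = tileCenter n) :
    t = tileCenter n := by
  have htn : t ∈ tileInterval n :=
    mem_tileInterval_of_spikeAbscissa_mem hw (ht ▸ tileCenter_mem_tileInterval n)
  have h := spikeAbscissa_sub_tileCenter (w := w) htn
  set u : ℝ := 2 ^ (n + 2) * t - 3 with hu
  rw [ht, sub_self, zero_eq_mul, or_iff_right (by positivity)] at h
  have hle : |u| ≤ (1 - w n) * |u| :=
    calc |u| = (1 - w n) * |zigzag u| := by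
          rw [eq_neg_of_add_eq_zero_left h, abs_neg, abs_mul,
            abs_of_nonneg (sub_nonneg.2 (hw n).2), ← eq_neg_of_add_eq_zero_left h]
      _ ≤ (1 - w n) * |u| :=
        mul_le_mul_of_nonneg_left (abs_zigzag_le u) (sub_nonneg.2 (hw n).2)
  have hu0 : u = 0 := abs_eq_zero.1 (by nlinarith [abs_nonneg u])
  rw [tileCenter]
  linear_combination (1 / 2) ^ (n + 2) * hu0 - (1 / 2) ^ (n + 2) * hu
    - t * two_pow_mul_half_pow (n + 2)

theorem spikeAbscissa_eq_tileCenter_or_spikeOrdinate_eq_zero (hn : w n = 0)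
    (ht : spikeAbscissa w t ∈ tileInterval n) :
    spikeAbscissa w t = tileCenter n ∨ spikeOrdinate t = 0 := by
  have htn := mem_tileInterval_of_spikeAbscissa_mem hw ht
  rw [← sub_eq_zero, spikeAbscissa_sub_tileCenter htn, spikeOrdinate_of_mem htn, hn]
  rcases zigzag_eq_neg_or_tent_eq_zero (2 ^ (n + 2) * t - 3) with h | h
  · exact Or.inl (by rw [h]; ring)
  · exact Or.inr (by rw [h, mul_zero])

theorem isDendrite_spikeDendrite : IsDendrite (spikeDendrite w) :=
  isDendrite_image_Icc_of_monotone (monotone_spikeAbscissa hw)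
    (lipschitzWith_spikeAbscissa hw).continuous lipschitzWith_spikeOrdinate.continuous
    (by norm_num)

theorem dist_spikeCurveApprox_le {q : ℕ → ℕ → ℚ} (hq : ∀ n s, |w n - q n s| ≤ (1 / 2) ^ s)
    (s : ℕ) (t : ℚ) :
    dist (spikeAbscissa w t, spikeOrdinate t) (ratPoint (spikeCurveApprox q s t))
      ≤ (1 / 2) ^ s := by
  rw [ratPoint, spikeCurveApprox, Prod.dist_eq, Real.dist_eq, Real.dist_eq]
  push_cast
  simp only [ratCast_tile ratCast_zigzag, ratCast_tile ratCast_tent]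
  refine max_le ?_ (isTileProfile_tent.abs_tiledSum_sub_sum_le (q := fun _ => 1) (by simp)
    (by simp) t)
  rw [spikeAbscissa, add_sub_add_left_eq_sub]
  refine isTileProfile_zigzag.abs_tiledSum_sub_sum_le (q := fun n => 1 - q n s)
    (abs_one_sub_width_le_one hw) (fun n => ?_) t
  rw [sub_sub_sub_cancel_left, abs_sub_comm]
  exact hq n s

theorem isComputableClosed_spikeDendrite {q : ℕ → ℕ → ℚ} (hq : Computable₂ q)
    (hwq : ∀ n s, |w n - q n s| ≤ (1 / 2) ^ s) : IsComputableClosed (spikeDendrite w) := by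
  have hlip : LipschitzWith (2 : ℕ) fun t => (spikeAbscissa w t, spikeOrdinate t) := by
    simpa using (lipschitzWith_spikeAbscissa hw).prodMk lipschitzWith_spikeOrdinate
  have h := isComputableClosed_image_Icc hlip (computable₂_spikeCurveApprox hq)
    (dist_spikeCurveApprox_le hw hwq) (a := -1) (b := 1) (by norm_num)
  rwa [Rat.cast_neg, Rat.cast_one] at h

end Width

end SpikeCurve

/-! ### Ramification points of subcontinua -/

section Ramification

theorem exists_isPreconnected_of_sameArcComponent {X : Type*} [TopologicalSpace X] {Y : Set X}
    {x y : X} (hx : x ∈ Y) (h : SameArcComponent Y x y) :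
    ∃ C ⊆ Y, IsPreconnected C ∧ x ∈ C ∧ y ∈ C := by
  rcases h with rfl | ⟨A, hA, f, hf, -, rfl, rfl, rfl⟩
  · exact ⟨{x}, singleton_subset_iff.2 hx, isPreconnected_singleton, rfl, rfl⟩
  · exact ⟨_, hA, isPreconnected_range hf, ⟨_, rfl⟩, ⟨_, rfl⟩⟩

/-- Near the vertical line `{x} × ℝ`, the set `T` consists of a vertical whisker on that line and
of points of the horizontal axis. -/
structure HasWhiskerAt (T : Set (ℝ × ℝ)) (x : ℝ) : Prop where
  snd_nonneg : ∀ z ∈ T, 0 ≤ z.2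
  exists_fst_eq_or_snd_eq_zero : ∃ U, IsOpen U ∧ x ∈ U ∧ ∀ z ∈ T, z.1 ∈ U → z.1 = x ∨ z.2 = 0

namespace HasWhiskerAt

variable {T : Set (ℝ × ℝ)} {x : ℝ}

theorem mono (h : HasWhiskerAt T x) {C : Set (ℝ × ℝ)} (hC : C ⊆ T) : HasWhiskerAt C x where
  snd_nonneg z hz := h.snd_nonneg z (hC hz)
  exists_fst_eq_or_snd_eq_zero :=
    let ⟨U, hUo, hxU, hU⟩ := h.exists_fst_eq_or_snd_eq_zero
    ⟨U, hUo, hxU, fun z hz => hU z (hC hz)⟩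

theorem base_mem (h : HasWhiskerAt T x) (hT : IsPreconnected T) {a b : ℝ × ℝ} (ha : a ∈ T)
    (hb : b ∈ T) (hax : a.1 = x) (hbx : b.1 ≠ x) : (x, 0) ∈ T := by
  by_contra hbase
  obtain ⟨U, hUo, hxU, hU⟩ := h.exists_fst_eq_or_snd_eq_zero
  have hwhisker : IsOpen {z : ℝ × ℝ | z.1 ∈ U ∧ 0 < z.2} :=
    (hUo.preimage continuous_fst).inter (isOpen_lt continuous_const continuous_snd)
  have hoff : IsOpen {z : ℝ × ℝ | z.1 ≠ x} := isOpen_ne_fun continuous_fst continuous_const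
  have hmem (z : ℝ × ℝ) (hz : z ∈ T) (hzx : z.1 = x) : z.1 ∈ U ∧ 0 < z.2 := by
    refine ⟨hzx ▸ hxU, (h.snd_nonneg z hz).lt_of_ne fun hz0 => hbase ?_⟩
    rwa [← hzx, hz0]
  obtain ⟨z, hz, ⟨hzU, hz0⟩, hzx⟩ := hT _ _ hwhisker hoff
    (fun z hz => (eq_or_ne z.1 x).imp (hmem z hz) id) ⟨a, ha, hmem a ha hax⟩ ⟨b, hb, hbx⟩
  exact (hU z hz hzU).elim hzx hz0.ne'

theorem not_sameArcComponent (h : HasWhiskerAt T x) {a b : ℝ × ℝ} (ha : a ∈ T \ {(x, 0)})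
    (hax : a.1 ≠ x) (hx : x ∈ uIcc a.1 b.1) : ¬SameArcComponent (T \ {(x, 0)}) a b := by
  intro hab
  obtain ⟨C, hCT, hC, haC, hbC⟩ := exists_isPreconnected_of_sameArcComponent ha hab
  obtain ⟨z, hz, hzx⟩ : x ∈ Prod.fst '' C :=
    (hC.image _ continuous_fst.continuousOn).ordConnected.uIcc_subset
      (mem_image_of_mem _ haC) (mem_image_of_mem _ hbC) hx
  exact (hCT ((h.mono (hCT.trans sdiff_subset)).base_mem hC hz haC hzx hax)).2 rfl

theorem isRamificationPoint (h : HasWhiskerAt T x) (hT : IsPreconnected T) {l r p : ℝ × ℝ}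
    (hl : l ∈ T) (hr : r ∈ T) (hp : p ∈ T) (hlx : l.1 < x) (hrx : x < r.1) (hpx : p.1 = x)
    (hp0 : p.2 ≠ 0) : IsRamificationPoint T (x, 0) := by
  have hl' : l ∈ T \ {(x, 0)} := ⟨hl, fun h => hlx.ne (congrArg Prod.fst h)⟩
  have hr' : r ∈ T \ {(x, 0)} := ⟨hr, fun h => hrx.ne' (congrArg Prod.fst h)⟩
  have hp' : p ∈ T \ {(x, 0)} := ⟨hp, fun h => hp0 (congrArg Prod.snd h)⟩
  refine ⟨h.base_mem hT hp hl hpx hlx.ne, l, r, p, hl', hr', hp',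
    h.not_sameArcComponent hl' hlx.ne (mem_uIcc_of_le hlx.le hrx.le),
    h.not_sameArcComponent hl' hlx.ne ?_, h.not_sameArcComponent hr' hrx.ne' ?_⟩ <;>
  · rw [hpx]
    exact right_mem_uIcc

end HasWhiskerAt

end Ramification

/-! ### Subcontinua of the spike dendrite -/

section Subcontinua

variable {w : ℕ → ℝ} {T : Set (ℝ × ℝ)}

theorem exists_mem_fst_lt_and_lt_fst_of_hausdorffDist_lt
    (hw : ∀ n, w n ∈ Icc (0 : ℝ) 1) (hT : IsContinuum T)
    (hTw : hausdorffDist T (spikeDendrite w) < 1 / 8) :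
    ∃ l ∈ T, ∃ r ∈ T, ∀ n, l.1 < tileCenter n ∧ tileCenter n < r.1 := by
  have hleft : (-1, spikeOrdinate (-1)) ∈ spikeDendrite w :=
    ⟨-1, by norm_num, by simp only [spikeAbscissa_neg_one]⟩
  have hright : (1, spikeOrdinate 1) ∈ spikeDendrite w :=
    ⟨1, by norm_num, by simp only [spikeAbscissa_one]⟩
  have hfin := hausdorffEDist_ne_top_of_nonempty_of_bounded hT.2.nonempty ⟨_, hleft⟩
    hT.1.isBounded (isDendrite_spikeDendrite hw).1.1.isBounded
  obtain ⟨l, hl, hdl⟩ := exists_dist_lt_of_hausdorffDist_lt' hleft hTw hfin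
  obtain ⟨r, hr, hdr⟩ := exists_dist_lt_of_hausdorffDist_lt' hright hTw hfin
  have hl1 := abs_lt.1 ((le_max_left _ _).trans_lt hdl)
  have hr1 := abs_lt.1 ((le_max_left _ _).trans_lt hdr)
  exact ⟨l, hl, r, hr, fun n =>
    ⟨by linarith [hl1.2, pos_of_mem_tileInterval (tileCenter_mem_tileInterval n)],
      by linarith [hr1.1, tileCenter_le_three_quarters n]⟩⟩

theorem spikeTip_mem_of_width_pos (hw : ∀ n, w n ∈ Icc (0 : ℝ) 1) (hT : IsPreconnected T)
    (hTw : T ⊆ spikeDendrite w) {n : ℕ} (hn : 0 < w n) {l r : ℝ × ℝ} (hl : l ∈ T) (hr : r ∈ T)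
    (hln : l.1 ≤ tileCenter n) (hrn : tileCenter n ≤ r.1) : ratPoint (spikeTip n) ∈ T := by
  obtain ⟨z, hz, hzn⟩ := hT.intermediate_value hl hr continuous_fst.continuousOn ⟨hln, hrn⟩
  obtain ⟨t, -, rfl⟩ := hTw hz
  have ht : t = tileCenter n := eq_tileCenter_of_spikeAbscissa_eq hw hn hzn
  have htip : ratPoint (spikeTip n) = (spikeAbscissa w t, spikeOrdinate t) := by
    rw [ratPoint_spikeTip, ← hzn, ht, spikeOrdinate_tileCenter]
  rwa [htip]

theorem hasWhiskerAt_spikeDendrite (hw : ∀ n, w n ∈ Icc (0 : ℝ) 1) {n : ℕ} (hn : w n = 0) :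
    HasWhiskerAt (spikeDendrite w) (tileCenter n) where
  snd_nonneg := by
    rintro _ ⟨t, -, rfl⟩
    exact spikeOrdinate_nonneg t
  exists_fst_eq_or_snd_eq_zero := by
    refine ⟨tileInterval n, isOpen_Ioo, tileCenter_mem_tileInterval n, ?_⟩
    rintro _ ⟨t, -, rfl⟩ ht
    exact spikeAbscissa_eq_tileCenter_or_spikeOrdinate_eq_zero hw hn ht

theorem finite_width_eq_zero_and_spikeTip_mem (hw : ∀ n, w n ∈ Icc (0 : ℝ) 1)
    (hT : IsTreeContinuum T) (hTw : T ⊆ spikeDendrite w) {l r : ℝ × ℝ} (hl : l ∈ T) (hr : r ∈ T)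
    (hlr : ∀ n, l.1 < tileCenter n ∧ tileCenter n < r.1) :
    {n | w n = 0 ∧ ratPoint (spikeTip n) ∈ T}.Finite := by
  have hinj : Function.Injective fun n => (tileCenter n, (0 : ℝ)) := fun _ _ h =>
    tileCenter_injective (congrArg Prod.fst h)
  refine (hT.2.preimage hinj.injOn).subset fun n ⟨hn, htip⟩ => ?_
  refine ((hasWhiskerAt_spikeDendrite hw hn).mono hTw).isRamificationPoint hT.1.1.2.isPreconnected
    hl hr htip (hlr n).1 (hlr n).2 ?_ ?_ <;> rw [ratPoint_spikeTip]
  positivity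

theorem rePred_width_eq_zero_of_hausdorffDist_lt (hw : ∀ n, w n ∈ Icc (0 : ℝ) 1)
    (hT : IsTreeContinuum T) (hTw : T ⊆ spikeDendrite w) (hTpi : IsPi01Closed T)
    (hTd : hausdorffDist T (spikeDendrite w) < 1 / 8) : REPred fun n => w n = 0 := by
  obtain ⟨l, hl, r, hr, hlr⟩ := exists_mem_fst_lt_and_lt_fst_of_hausdorffDist_lt hw hT.1.1 hTd
  have hfin := finite_width_eq_zero_and_spikeTip_mem hw hT hTw hl hr hlr
  refine (rePred_or (rePred_ratPoint_notMem hTpi computable_spikeTip)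
    (primrecPred_mem_of_finite hfin).computablePred.to_re).of_eq fun n => ?_
  have hpos : w n ≠ 0 → ratPoint (spikeTip n) ∈ T := fun hn =>
    spikeTip_mem_of_width_pos hw hT.1.1.2.isPreconnected hTw ((hw n).1.lt_of_ne' hn) hl hr
      (hlr n).1.le (hlr n).2.le
  simp only [Set.mem_ofPred_eq]
  tauto

end Subcontinua

theorem exists_computable_dendrite_not_star_including_pi01_tree :
    ∃ D : Set (ℝ × ℝ), IsComputableClosed D ∧ IsDendrite D ∧
      ∃ ε : ℝ, 0 < ε ∧ ∀ T : Set (ℝ × ℝ), T ⊆ D → IsPi01Closed T → IsTreeContinuum T →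
        ε ≤ Metric.hausdorffDist T D := by
  obtain ⟨p, hp, hnp⟩ := exists_rePred_nat_not_rePred_not
  obtain ⟨w, q, hq, hw, hwq, hwp⟩ := exists_real_pos_iff_of_rePred hp
  refine ⟨spikeDendrite w, isComputableClosed_spikeDendrite hw hq hwq, isDendrite_spikeDendrite hw,
    1 / 8, by norm_num, fun T hTw hTpi hT => ?_⟩
  by_contra! hTd
  refine hnp ((rePred_width_eq_zero_of_hausdorffDist_lt hw hT hTw hTpi hTd).of_eq fun n => ?_)
  rw [← hwp n, (hw n).1.lt_iff_ne', not_not]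
end
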